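/- arXiv:1102.1462 — 2 statements merged into one kernel-verified Lean document; each statement's English description precedes it below -/
import Mathlib

section
/- In a SIMO quasi-static frequency-selective channel with memory ν, N receive antennas and data block length L_d ≥ ν+1, the MMSE receiver diversity under cyclic-prefix transmission is N·min(ν+1, ⌊2^{−R}·L_d⌋ + 1): for every fixed rate R > 0, lim_{ρ→∞} log P_out(ρ) / log ρ = −N·min(ν+1, ⌊2^{−R}·L_d⌋ + 1). -/
/-!
Put `T = L_d 2^{-R}`, `m = ⌊T⌋`, `k = min (ν + 1) (m + 1)`. The vectors `b_q` are the values of the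
channel polynomial `∑ h_n z^n` at the `L_d` roots of unity, so any `ν + 1` of them determine the
taps: they are the coordinates of an invertible linear map `A` applied to the Gaussian vector `ω`
(`det_chan_ne_zero`). Hence, up to constants, the law of these coordinates is dominated by a product
of Gaussian laws (`lintegral_matrixLaw_lt_top`), and it has a density bounded below on bounded sets
(`exists_prob_box_ge`).

Upper bound (`pout_upper`). Write `x_q = ρ λ_q`. Outage means `∑ 1/(1+x_q) > T`. If `T` is not an
integer this clearly makes some `k` of the `x_q` bounded. If `T = m` is an integer, the `k`-th
smallest value `y` may be large, but then the `k - 1` smaller ones must be `O(1/y)`. In all cases the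
*product* of the `k` smallest `x_q` is bounded (`exists_small_product`). For `r < 1` the negative
moment `E ∏ |b_{q,l}|^{-2r}` over `k` distinct frequencies and all antennas is finite, because
`|z|^{-2r}` is integrable near the origin of the plane. Since `λ_q^N ≥ ∏_l |b_{q,l}|²`, Markov's
inequality gives `P_out = O(ρ^{-Nkr})`, and `r` is arbitrarily close to `1`.

Lower bound (`pout_lower`). Asking that `|b_{q,l}|² ≤ δ²/ρ` at the first `k` frequencies, the
remaining coordinates being merely bounded, has probability at least a constant times `ρ^{-Nk}`.
For small `δ` this causes outage: if `k = m + 1`, already `m + 1 > T` terms of the sum are close to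
`1`; if `k = ν + 1`, the taps are determined by these values, so all `L_d > T` terms are close to `1`.
-/

open MeasureTheory ProbabilityTheory Filter

noncomputable section

/-- Law of a single standard circularly-symmetric complex Gaussian entry, represented as
its pair (re, im) of independent `N(0, 1/2)` real Gaussians. -/
def entryLaw : Measure (ℝ × ℝ) := (gaussianReal 0 (1 / 2)).prod (gaussianReal 0 (1 / 2))

instance : IsProbabilityMeasure entryLaw := by
  unfold entryLaw; infer_instance

/-- Law of a family of i.i.d. standard complex Gaussian entries indexed by `ι`. -/
def matrixLaw (ι : Type*) [Fintype ι] : Measure (ι → ℝ × ℝ) :=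
  Measure.pi fun _ => entryLaw

/-- Turn a pair of reals into a complex number. -/
def toC (p : ℝ × ℝ) : ℂ := ⟨p.1, p.2⟩

/-- `λ_q = ‖b_q‖²` where `b_q = ∑_{n=0}^{ν} h_n e^{−j2πn(q−1)/L_d} ∈ ℂ^N` and the SIMO
channel taps `h_0, …, h_ν ∈ ℂ^N` have i.i.d. standard complex Gaussian entries (drawn
from `ω`). Here `q : Fin L_d` is zero-indexed, corresponding to `q−1` in the paper. -/
def lam (N ν Ld : ℕ) (ω : Fin (ν + 1) × Fin N → ℝ × ℝ) (q : Fin Ld) : ℝ :=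
  ∑ l : Fin N, Complex.normSq (∑ n : Fin (ν + 1),
    toC (ω (n, l)) *
      Complex.exp (-(2 * (Real.pi : ℂ) * Complex.I * ((n : ℕ) : ℂ) * ((q : ℕ) : ℂ))
        / (Ld : ℂ)))

/-- MMSE outage probability of the SIMO cyclic-prefix system at rate `R` and SNR `ρ`:
`P_out(ρ) = Prob(∑_{q=1}^{L_d} 1/(1+ρλ_q) > L_d·2^{−R})`. -/
def PoutSIMO (N ν Ld : ℕ) (R ρ : ℝ) : ℝ :=
  (matrixLaw (Fin (ν + 1) × Fin N)
    {ω | (Ld : ℝ) * 2 ^ (-R) < ∑ q : Fin Ld, 1 / (1 + ρ * lam N ν Ld ω q)}).toReal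

open scoped ENNReal

/-! ### Product integrals and the Gaussian density -/

/-- Tonelli's theorem for a product of nonnegative functions of separate coordinates. -/
lemma lintegral_fin_prod {E : Type*} [MeasurableSpace E] (μ : Measure E) [SigmaFinite μ] (n : ℕ)
    (f : Fin n → E → ℝ≥0∞) (hf : ∀ i, Measurable (f i)) :
    ∫⁻ x : Fin n → E, ∏ i, f i (x i) ∂(Measure.pi fun _ => μ) = ∏ i, ∫⁻ x, f i x ∂μ := by
  induction n with
  | zero => simp
  | succ n ih =>
    rw [← ((measurePreserving_piFinSuccAbove (fun _ : Fin (n + 1) => μ) 0).symm).lintegral_comp_emb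
      (MeasurableEquiv.measurableEmbedding _)]
    simp_rw [MeasurableEquiv.piFinSuccAbove_symm_apply, Fin.insertNthEquiv,
      Fin.prod_univ_succ, Fin.insertNth_zero, Equiv.coe_fn_mk, Fin.cons_succ,
      Fin.cons_zero]
    rw [← ih (fun i => f i.succ) (fun i => hf _)]
    refine lintegral_prod_mul (μ := μ) (ν := Measure.pi fun _ : Fin n => μ) (f := f 0) (g := fun x : Fin n → E => ∏ i, f i.succ (x i))
      (hf 0).aemeasurable ?_
    exact (Finset.measurable_prod _ fun i _ => (hf _).comp (measurable_pi_apply i)).aemeasurable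

lemma lintegral_fintype_prod {ι E : Type*} [Fintype ι] [MeasurableSpace E] (μ : Measure E)
    [SigmaFinite μ] (f : ι → E → ℝ≥0∞) (hf : ∀ i, Measurable (f i)) :
    ∫⁻ x : ι → E, ∏ i, f i (x i) ∂(Measure.pi fun _ => μ) = ∏ i, ∫⁻ x, f i x ∂μ := by
  let e := (Fintype.equivFin ι).symm
  rw [← (measurePreserving_piCongrLeft (fun _ => μ) e).lintegral_comp_emb
    (MeasurableEquiv.measurableEmbedding _)]
  simp_rw [← e.prod_comp, MeasurableEquiv.coe_piCongrLeft, Equiv.piCongrLeft_apply_apply]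
  exact lintegral_fin_prod μ _ (fun i => f (e i)) fun i => hf _

/-- The squared modulus of a complex number given by its pair of coordinates. -/
def nsq (p : ℝ × ℝ) : ℝ := p.1 ^ 2 + p.2 ^ 2

lemma nsq_nonneg (p : ℝ × ℝ) : 0 ≤ nsq p := by unfold nsq; positivity

lemma continuous_nsq : Continuous nsq := by unfold nsq; fun_prop

lemma norm_sq_le_nsq (p : ℝ × ℝ) : ‖p‖ ^ 2 ≤ nsq p := by
  rw [Prod.norm_def, nsq]
  rcases max_cases ‖p.1‖ ‖p.2‖ with ⟨h, -⟩ | ⟨h, -⟩ <;> rw [h, Real.norm_eq_abs, sq_abs] <;>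
    nlinarith [sq_nonneg p.1, sq_nonneg p.2]

lemma nsq_le (p : ℝ × ℝ) : nsq p ≤ 2 * ‖p‖ ^ 2 := by
  have h1 := norm_fst_le p
  have h2 := norm_snd_le p
  rw [Real.norm_eq_abs] at h1 h2
  have h3 := pow_le_pow_left₀ (abs_nonneg _) h1 2
  have h4 := pow_le_pow_left₀ (abs_nonneg _) h2 2
  rw [sq_abs] at h3 h4
  unfold nsq; linarith

lemma entryLaw_eq : entryLaw =
    (volume : Measure (ℝ × ℝ)).withDensity fun z => ENNReal.ofReal (Real.pi⁻¹ * Real.exp (-nsq z)) := by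
  unfold entryLaw
  rw [gaussianReal_of_var_ne_zero _ (by norm_num),
    prod_withDensity (measurable_gaussianPDF _ _) (measurable_gaussianPDF _ _)]
  congr 1
  ext z
  rw [gaussianPDF, gaussianPDF, ← ENNReal.ofReal_mul (gaussianPDFReal_nonneg _ _ _)]
  congr 1
  simp only [gaussianPDFReal, nsq]
  have h2 : (2 : ℝ) * Real.pi * ((1 / 2 : NNReal) : ℝ) = Real.pi := by push_cast; ring
  rw [h2]
  have h3 : ∀ a b c : ℝ, a * b * (a * c) = (a * a) * (b * c) := fun _ _ _ => by ring
  rw [h3, ← mul_inv, Real.mul_self_sqrt Real.pi_pos.le, ← Real.exp_add]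
  congr 2
  push_cast
  ring

lemma matrixLaw_eq (ι : Type*) [Fintype ι] : matrixLaw ι =
    (volume : Measure (ι → ℝ × ℝ)).withDensity
      fun ω => ∏ i, ENNReal.ofReal (Real.pi⁻¹ * Real.exp (-nsq (ω i))) := by
  have hm : Measurable fun z : ℝ × ℝ => ENNReal.ofReal (Real.pi⁻¹ * Real.exp (-nsq z)) := by
    have := continuous_nsq
    fun_prop
  unfold matrixLaw
  refine (Measure.pi_eq fun s hs => ?_)
  rw [withDensity_apply _ (MeasurableSet.univ_pi hs), volume_pi, Measure.restrict_pi_pi]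
  have : ∀ i, entryLaw (s i) = ∫⁻ z, (s i).indicator
      (fun z => ENNReal.ofReal (Real.pi⁻¹ * Real.exp (-nsq z))) z := by
    intro i
    rw [entryLaw_eq, withDensity_apply _ (hs i), lintegral_indicator (hs i)]
  simp_rw [this]
  rw [← lintegral_fintype_prod volume _ fun i => hm.indicator (hs i), ← Measure.restrict_pi_pi,
    ← lintegral_indicator (MeasurableSet.univ_pi hs)]
  congr 1
  ext ω
  by_cases h : ω ∈ Set.univ.pi s
  · rw [Set.indicator_of_mem h]
    exact Finset.prod_congr rfl fun i _ => by
      rw [Set.indicator_of_mem (h i trivial)]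
  · rw [Set.indicator_of_notMem h]
    simp only [Set.mem_pi, Set.mem_univ, true_imp_iff, not_forall] at h
    obtain ⟨i, hi⟩ := h
    exact (Finset.prod_eq_zero (Finset.mem_univ i) (Set.indicator_of_notMem hi _)).symm

/-- A negative power of `|z|²` is integrable at the origin of the plane below the exponent `1`,
and the Gaussian factor controls it at infinity. -/
lemma lintegral_weight {r c : ℝ} (hr0 : 0 < r) (hr : r < 1) (hc : 0 < c) :
    ∫⁻ z : ℝ × ℝ, ENNReal.ofReal (nsq z) ^ (-r) * ENNReal.ofReal (Real.exp (-c * nsq z)) < ∞ := by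
  have hint : Integrable (fun z : ℝ × ℝ => ‖z‖ ^ (-(2 * r)) * Real.exp (-c * ‖z‖ ^ 2)) := by
    refine (integrable_fun_norm_addHaar (E := ℝ × ℝ) volume
      (f := fun y => y ^ (-(2 * r)) * Real.exp (-c * y ^ 2))).2 ?_
    have := integrableOn_rpow_mul_exp_neg_mul_sq hc (s := 1 - 2 * r) (by linarith)
    refine this.congr_fun (fun y hy => ?_) measurableSet_Ioi
    have hy : (0 : ℝ) < y := hy
    simp only [Module.finrank_prod, Module.finrank_self, smul_eq_mul]
    rw [← mul_assoc]
    congr 1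
    rw [sub_eq_add_neg, Real.rpow_add hy]
    simp
  refine lt_of_le_of_lt (lintegral_mono_ae ?_) hint.lintegral_lt_top
  have h0 : ∀ᵐ z : ℝ × ℝ, z ≠ 0 := by
    simp [ae_iff, measure_singleton]
  filter_upwards [h0] with z hz
  have hz' : 0 < ‖z‖ := norm_pos_iff.2 hz
  have h1 := norm_sq_le_nsq z
  have h2 : 0 < nsq z := lt_of_lt_of_le (by positivity) h1
  rw [ENNReal.ofReal_rpow_of_pos h2, ← ENNReal.ofReal_mul (by positivity)]
  refine ENNReal.ofReal_le_ofReal (mul_le_mul ?_ ?_ (by positivity) (by positivity))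
  · have : ‖z‖ ^ (-(2 * r)) = (‖z‖ ^ 2) ^ (-r) := by
      rw [← Real.rpow_natCast, ← Real.rpow_mul hz'.le]; congr 1; push_cast; ring
    rw [this]
    exact Real.rpow_le_rpow_of_nonpos (by positivity) h1 (by linarith)
  · exact Real.exp_le_exp.2 (by nlinarith)

/-! ### Gaussian estimates in linear coordinates -/

section LinearChange

variable {ι : Type*} [Fintype ι] (A : (ι → ℝ × ℝ) →ₗ[ℝ] (ι → ℝ × ℝ))

lemma exists_energy_bound :
    ∃ c : ℝ, 0 < c ∧ ∀ ω, c * ∑ i, nsq (A ω i) ≤ ∑ i, nsq (ω i) := by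
  let B := LinearMap.toContinuousLinearMap A
  have hB : ∀ ω, B ω = A ω := fun _ => rfl
  set K : ℝ := 2 * Fintype.card ι * ‖B‖ ^ 2 + 1 with hK
  have hK0 : 0 < K := by positivity
  refine ⟨K⁻¹, by positivity, fun ω => ?_⟩
  rw [inv_mul_le_iff₀ hK0]
  have h1 : ∑ i, nsq (A ω i) ≤ Fintype.card ι * (2 * (‖B‖ * ‖ω‖) ^ 2) := by
    rw [← nsmul_eq_mul]
    refine Finset.sum_le_card_nsmul _ _ _ fun i _ => (nsq_le _).trans ?_
    have : ‖A ω i‖ ≤ ‖B‖ * ‖ω‖ := (norm_le_pi_norm (A ω) i).trans (B.le_opNorm ω)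
    gcongr
  have hs : 0 ≤ ∑ i, nsq (ω i) := Finset.sum_nonneg fun i _ => nsq_nonneg _
  have h2 : ‖ω‖ ^ 2 ≤ ∑ i, nsq (ω i) := by
    have : ‖ω‖ ≤ √(∑ i, nsq (ω i)) := by
      refine (pi_norm_le_iff_of_nonneg (Real.sqrt_nonneg _)).2 fun i => Real.le_sqrt_of_sq_le ?_
      exact (norm_sq_le_nsq _).trans
        (Finset.single_le_sum (f := fun i => nsq (ω i)) (fun i _ => nsq_nonneg _) (Finset.mem_univ i))
    calc ‖ω‖ ^ 2 ≤ √(∑ i, nsq (ω i)) ^ 2 := by gcongr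
      _ = _ := Real.sq_sqrt hs
  calc ∑ i, nsq (A ω i) ≤ 2 * Fintype.card ι * ‖B‖ ^ 2 * ‖ω‖ ^ 2 := by
        refine h1.trans (le_of_eq ?_); ring
    _ ≤ 2 * Fintype.card ι * ‖B‖ ^ 2 * ∑ i, nsq (ω i) := by gcongr
    _ ≤ K * ∑ i, nsq (ω i) := by gcongr; linarith

/-- Passing to the coordinates `A ω`, the Gaussian density is dominated by a product of Gaussian
densities, so the expectation of a product of functions of separate coordinates is finite as soon
as each factor is integrable against every centred Gaussian weight. -/
lemma lintegral_matrixLaw_lt_top (hA : LinearMap.det A ≠ 0) (g : ι → ℝ × ℝ → ℝ≥0∞)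
    (hg : ∀ i, Measurable (g i))
    (hfin : ∀ i, ∀ c : ℝ, 0 < c → ∫⁻ z, g i z * ENNReal.ofReal (Real.exp (-c * nsq z)) < ∞) :
    ∫⁻ ω, ∏ i, g i (A ω i) ∂(matrixLaw ι) < ∞ := by
  obtain ⟨c, hc, hcA⟩ := exists_energy_bound A
  have hn := continuous_nsq
  have hAm : Measurable A := (LinearMap.continuous_of_finiteDimensional A).measurable
  have hD : Measurable fun ω : ι → ℝ × ℝ =>
      ∏ i, ENNReal.ofReal (Real.pi⁻¹ * Real.exp (-nsq (ω i))) := by fun_prop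
  set G : (ι → ℝ × ℝ) → ℝ≥0∞ :=
    fun b => ∏ i, (g i (b i) * ENNReal.ofReal (Real.exp (-c * nsq (b i)))) with hG
  have hGm : Measurable G := by
    refine Finset.measurable_prod _ fun i _ => ?_
    refine ((hg i).comp (measurable_pi_apply i)).mul ?_
    fun_prop
  have hprodm : Measurable fun ω => ∏ i, g i (A ω i) :=
    Finset.measurable_prod _ fun i _ => (hg i).comp ((measurable_pi_apply i).comp hAm)
  set M : ℝ≥0∞ := ∏ _i : ι, ENNReal.ofReal Real.pi⁻¹ with hM
  have hMtop : M ≠ ∞ := ENNReal.prod_ne_top fun _ _ => ENNReal.ofReal_ne_top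
  have hexp : ∀ (a : ℝ) (ω : ι → ℝ × ℝ), ∏ i, ENNReal.ofReal (Real.exp (a * nsq (ω i)))
      = ENNReal.ofReal (Real.exp (a * ∑ i, nsq (ω i))) := by
    intro a ω
    rw [← ENNReal.ofReal_prod_of_nonneg fun i _ => (Real.exp_pos _).le, ← Real.exp_sum,
      Finset.mul_sum]
  have hle : ∀ ω, ((fun ω : ι → ℝ × ℝ =>
      ∏ i, ENNReal.ofReal (Real.pi⁻¹ * Real.exp (-nsq (ω i)))) * fun ω => ∏ i, g i (A ω i)) ω
        ≤ M * G (A ω) := by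
    intro ω
    simp only [Pi.mul_apply, hG]
    rw [Finset.prod_mul_distrib, hexp (-c)]
    have h1 : ∏ i, ENNReal.ofReal (Real.pi⁻¹ * Real.exp (-nsq (ω i)))
        = M * ENNReal.ofReal (Real.exp ((-1) * ∑ i, nsq (ω i))) := by
      rw [hM, ← hexp, ← Finset.prod_mul_distrib]
      refine Finset.prod_congr rfl fun i _ => ?_
      rw [← ENNReal.ofReal_mul (by positivity), neg_one_mul]
    rw [h1, mul_assoc, mul_comm (∏ i, g i (A ω i))]
    have hE : Real.exp ((-1) * ∑ i, nsq (ω i)) ≤ Real.exp (-c * ∑ i, nsq (A ω i)) :=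
      Real.exp_le_exp.2 (by linarith [hcA ω])
    gcongr
  rw [matrixLaw_eq, lintegral_withDensity_eq_lintegral_mul _ hD hprodm]
  refine lt_of_le_of_lt (lintegral_mono hle) ?_
  rw [lintegral_const_mul M (show Measurable fun ω => G (A ω) from hGm.comp hAm), ← lintegral_map (f := G) hGm hAm,
    Measure.map_linearMap_addHaar_eq_smul_addHaar _ hA, lintegral_smul_measure]
  refine ENNReal.mul_lt_top hMtop.lt_top (ENNReal.mul_lt_top ENNReal.ofReal_lt_top ?_)
  rw [hG, volume_pi, lintegral_fintype_prod (volume : Measure (ℝ × ℝ))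
    (fun i z => g i z * ENNReal.ofReal (Real.exp (-c * nsq z)))]
  · exact ENNReal.prod_lt_top fun i _ => hfin i c hc
  · intro i
    exact (hg i).mul (by fun_prop)

/-- Markov's inequality for the product of the `|(A ω)ᵢ|²` over a set `F` of coordinates, applied
to a negative moment. -/
lemma exists_prob_prod_le (hA : LinearMap.det A ≠ 0) (F : Finset ι) {r : ℝ} (hr0 : 0 < r)
    (hr : r < 1) :
    ∃ K : ℝ, 0 < K ∧ ∀ t : ℝ, 0 < t →
      matrixLaw ι {ω | ∏ i ∈ F, nsq (A ω i) ≤ t} ≤ ENNReal.ofReal (K * t ^ r) := by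
  classical
  set g : ι → ℝ × ℝ → ℝ≥0∞ := fun i z => if i ∈ F then ENNReal.ofReal (nsq z) ^ (-r) else 1 with hg
  have hn := continuous_nsq
  have hgm : ∀ i, Measurable (g i) := by
    intro i
    by_cases h : i ∈ F
    · simp only [hg, h, if_true]
      fun_prop
    · simp only [hg, h, if_false]
      fun_prop
  have hfin := lintegral_matrixLaw_lt_top A hA g hgm (by
    intro i c hc
    by_cases h : i ∈ F
    · simpa only [hg, h, if_true] using lintegral_weight hr0 hr hc
    · simp only [hg, h, if_false, one_mul]
      have hint : Integrable (fun z : ℝ × ℝ => Real.exp (-c * z.1 ^ 2) * Real.exp (-c * z.2 ^ 2)) :=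
        (integrable_exp_neg_mul_sq hc).mul_prod (integrable_exp_neg_mul_sq hc)
      refine lt_of_le_of_lt (lintegral_mono fun z => le_of_eq ?_) hint.lintegral_lt_top
      simp only
      rw [← Real.exp_add, nsq]
      congr 2; ring)
  set I := ∫⁻ ω, ∏ i, g i (A ω i) ∂(matrixLaw ι) with hI
  have hAm : Measurable A := (LinearMap.continuous_of_finiteDimensional A).measurable
  have hprodm : Measurable fun ω => ∏ i, g i (A ω i) :=
    Finset.measurable_prod _ fun i _ => (hgm i).comp ((measurable_pi_apply i).comp hAm)
  refine ⟨I.toReal + 1, by positivity, fun t ht => ?_⟩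
  have hprod : ∀ ω, ∏ i, g i (A ω i) = ENNReal.ofReal (∏ i ∈ F, nsq (A ω i)) ^ (-r) := by
    intro ω
    simp only [hg]
    rw [Finset.prod_ite_mem, Finset.univ_inter, ENNReal.ofReal_prod_of_nonneg fun i _ => nsq_nonneg _,
      ENNReal.prod_rpow_of_ne_top fun i _ => ENNReal.ofReal_ne_top]
  have hm := mul_meas_ge_le_lintegral (μ := matrixLaw ι) hprodm (ENNReal.ofReal t ^ (-r))
  have hpow : ENNReal.ofReal t ^ (-r) = (ENNReal.ofReal (t ^ r))⁻¹ := by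
    rw [ENNReal.rpow_neg, ENNReal.ofReal_rpow_of_pos ht]
  have hsub : {ω | ∏ i ∈ F, nsq (A ω i) ≤ t} ⊆
      {ω | ENNReal.ofReal t ^ (-r) ≤ ∏ i, g i (A ω i)} := by
    intro ω hω
    simp only [Set.mem_ofPred_eq] at hω ⊢
    rw [hprod, ENNReal.rpow_neg, ENNReal.rpow_neg]
    gcongr
  refine (measure_mono hsub).trans ?_
  have ht' : 0 < t ^ r := Real.rpow_pos_of_pos ht r
  rw [hpow] at hm
  rw [ENNReal.inv_mul_le_iff (by simpa using ht') ENNReal.ofReal_ne_top] at hm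
  rw [hpow]
  refine hm.trans ?_
  rw [mul_comm, ENNReal.ofReal_mul (by positivity)]
  gcongr
  exact (ENNReal.ofReal_toReal hfin.ne).symm.le.trans (ENNReal.ofReal_le_ofReal (by linarith))

/-- Conversely the density is bounded below on bounded sets, so a box in the coordinates `A ω` with
sides at most `1` has probability at least a constant times its volume. -/
lemma exists_prob_box_ge (hA : LinearMap.det A ≠ 0) :
    ∃ K : ℝ, 0 < K ∧ ∀ s : ι → ℝ, (∀ i, 0 < s i) → (∀ i, s i ≤ 1) →
      ENNReal.ofReal (K * ∏ i, s i ^ 2) ≤ matrixLaw ι {ω | ∀ i, ‖A ω i‖ ≤ s i} := by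
  have hker : LinearMap.ker A = ⊥ := by
    by_contra h
    exact hA (LinearMap.det_eq_zero_iff_ker_ne_bot.2 h)
  obtain ⟨L, hL0, hL⟩ := LinearMap.exists_antilipschitzWith A hker
  have hAm : Measurable A := (LinearMap.continuous_of_finiteDimensional A).measurable
  have hn := continuous_nsq
  set d : ℝ := ∏ _i : ι, Real.pi⁻¹ * Real.exp (-(2 * (L : ℝ) ^ 2)) with hd
  have hd0 : 0 < d := Finset.prod_pos fun i _ => by positivity
  set a : ℝ := |(LinearMap.det A)⁻¹| with ha
  have ha0 : 0 < a := by positivity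
  refine ⟨d * a, by positivity, fun s hs hs1 => ?_⟩
  set B : Set (ι → ℝ × ℝ) := Set.univ.pi fun i => Metric.closedBall 0 (s i) with hB
  have hBm : MeasurableSet B := MeasurableSet.univ_pi fun i => measurableSet_closedBall
  have hset : {ω | ∀ i, ‖A ω i‖ ≤ s i} = A ⁻¹' B := by
    ext ω; simp [hB]
  have hvol : volume (A ⁻¹' B) = ENNReal.ofReal a * ∏ i, ENNReal.ofReal ((2 * s i) ^ 2) := by
    rw [← Measure.map_apply hAm hBm, Measure.map_linearMap_addHaar_eq_smul_addHaar _ hA,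
      Measure.smul_apply, hB, volume_pi, Measure.pi_pi, smul_eq_mul]
    congr 1
    refine Finset.prod_congr rfl fun i _ => ?_
    rw [show (0 : ℝ × ℝ) = (0, 0) from rfl, ← closedBall_prod_same, Measure.volume_eq_prod,
      Measure.prod_prod, Real.volume_closedBall, ← ENNReal.ofReal_mul (by linarith [hs i]), sq]
  rw [hset, matrixLaw_eq, withDensity_apply _ (hAm hBm)]
  have hge : ∀ ω ∈ A ⁻¹' B, ENNReal.ofReal d ≤
      ∏ i, ENNReal.ofReal (Real.pi⁻¹ * Real.exp (-nsq (ω i))) := by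
    intro ω hω
    rw [hd, ENNReal.ofReal_prod_of_nonneg fun i _ => by positivity]
    refine Finset.prod_le_prod' fun i _ => ENNReal.ofReal_le_ofReal ?_
    have h1 : ‖A ω‖ ≤ 1 := by
      refine (pi_norm_le_iff_of_nonneg zero_le_one).2 fun i => ?_
      have := hω i trivial
      rw [mem_closedBall_zero_iff] at this
      exact this.trans (hs1 i)
    have h2 : ‖ω‖ ≤ L * ‖A ω‖ := by
      have := hL.le_mul_dist ω 0
      simpa using this
    have h3 : ‖ω i‖ ≤ L := by
      refine (norm_le_pi_norm ω i).trans (h2.trans ?_)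
      exact mul_le_of_le_one_right L.2 h1
    have h4 := nsq_le (ω i)
    have h5 : ‖ω i‖ ^ 2 ≤ (L : ℝ) ^ 2 := by gcongr
    gcongr
    linarith
  calc ENNReal.ofReal (d * a * ∏ i, s i ^ 2)
      ≤ ENNReal.ofReal d * volume (A ⁻¹' B) := by
        rw [hvol, ← ENNReal.ofReal_prod_of_nonneg fun i _ => by positivity,
          ← ENNReal.ofReal_mul ha0.le, ← ENNReal.ofReal_mul hd0.le, mul_assoc]
        refine ENNReal.ofReal_le_ofReal ?_
        gcongr with i
        · exact (hs i).le
        · linarith [hs i]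
    _ = ∫⁻ _ω in A ⁻¹' B, ENNReal.ofReal d := by simp
    _ ≤ _ := setLIntegral_mono' (hAm hBm) hge

end LinearChange

/-! ### The channel as a linear map -/

/-- The point `e^{−j2πq/L_d}` of the unit circle at which the channel polynomial is evaluated. -/
def node (Ld q : ℕ) : ℂ := Complex.exp (-(2 * (Real.pi : ℂ) * Complex.I * (q : ℂ)) / (Ld : ℂ))

lemma node_injective {Ld : ℕ} : Function.Injective fun q : Fin Ld => node Ld q := by
  intro p q hpq
  have hLd : Ld ≠ 0 := by have := p.2; omega
  have h := Complex.isPrimitiveRoot_exp Ld hLd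
  have hpow : ∀ n : ℕ, node Ld n = (Complex.exp (2 * Real.pi * Complex.I / Ld) ^ n)⁻¹ := by
    intro n
    rw [node, ← Complex.exp_nat_mul, ← Complex.exp_neg]
    congr 1; ring
  simp only [hpow, inv_inj] at hpq
  exact Fin.ext (h.pow_inj p.2 q.2 hpq)

lemma toC_add (x y : ℝ × ℝ) : toC (x + y) = toC x + toC y := rfl

lemma toC_smul (c : ℝ) (x : ℝ × ℝ) : toC (c • x) = c • toC x := by
  apply Complex.ext <;> simp [toC]

/-- The real-linear map sending the channel taps `h_n` to the values `∑ h_n w_j^n` of the channel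
polynomial at `ν + 1` prescribed points `w_j`, for each of the `N` antennas. -/
def chan (N ν : ℕ) (w : Fin (ν + 1) → ℂ) :
    (Fin (ν + 1) × Fin N → ℝ × ℝ) →ₗ[ℝ] (Fin (ν + 1) × Fin N → ℝ × ℝ) where
  toFun ω i := Complex.equivRealProdLm (∑ n : Fin (ν + 1), toC (ω (n, i.2)) * w i.1 ^ (n : ℕ))
  map_add' x y := by
    ext1 i
    simp only [Pi.add_apply, toC_add, add_mul, Finset.sum_add_distrib, map_add]
  map_smul' c x := by
    ext1 i
    simp only [Pi.smul_apply, toC_smul, smul_mul_assoc, ← Finset.smul_sum, map_smul, RingHom.id_apply]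

lemma nsq_chan {N ν : ℕ} (w : Fin (ν + 1) → ℂ) (ω : Fin (ν + 1) × Fin N → ℝ × ℝ)
    (i : Fin (ν + 1) × Fin N) : nsq (chan N ν w ω i) =
      Complex.normSq (∑ n : Fin (ν + 1), toC (ω (n, i.2)) * w i.1 ^ (n : ℕ)) := by
  change nsq (Complex.equivRealProd _) = _
  rw [Complex.normSq_apply, nsq, Complex.equivRealProd_apply]
  ring

lemma lam_eq {N ν Ld : ℕ} (ω : Fin (ν + 1) × Fin N → ℝ × ℝ) (e : Fin (ν + 1) → Fin Ld)
    (j : Fin (ν + 1)) :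
    lam N ν Ld ω (e j) = ∑ l, nsq (chan N ν (fun j => node Ld (e j)) ω (j, l)) := by
  unfold lam
  refine Finset.sum_congr rfl fun l _ => ?_
  rw [nsq_chan]
  congr 1
  refine Finset.sum_congr rfl fun n _ => ?_
  rw [node, ← Complex.exp_nat_mul]
  congr 2; ring

lemma lam_nonneg {N ν Ld : ℕ} (ω : Fin (ν + 1) × Fin N → ℝ × ℝ) (q : Fin Ld) :
    0 ≤ lam N ν Ld ω q := Finset.sum_nonneg fun _ _ => Complex.normSq_nonneg _

/-- A polynomial of degree at most `ν` is determined by its values at `ν + 1` distinct points. -/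
lemma det_chan_ne_zero {N ν : ℕ} {w : Fin (ν + 1) → ℂ} (hw : Function.Injective w) :
    LinearMap.det (chan N ν w) ≠ 0 := by
  intro h
  refine LinearMap.det_eq_zero_iff_ker_ne_bot.1 h (LinearMap.ker_eq_bot'.2 fun ω hω => ?_)
  have h0 : ∀ l : Fin N, (fun n => toC (ω (n, l))) = 0 := by
    intro l
    refine Matrix.eq_zero_of_forall_index_sum_mul_pow_eq_zero hw fun j => ?_
    have h1 := nsq_chan w ω (j, l)
    rw [hω] at h1
    exact Complex.normSq_eq_zero.1 (h1.symm.trans (by simp [nsq]))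
  ext ⟨n, l⟩
  · exact congrArg Complex.re (congrFun (h0 l) n)
  · exact congrArg Complex.im (congrFun (h0 l) n)

/-! ### A deterministic consequence of outage -/

/-- If `∑ 1/(1+x_q)` exceeds a positive `T ≥ k - 1`, the product of the `k` smallest `x_q` is
bounded. When `T = k - 1` the `k`-th smallest value `y` may be large, but then each of the `k - 1`
smaller ones is `O(1/y)`. -/
lemma exists_small_product {M L k : ℕ} (hML : M ≤ L) (hk1 : 1 ≤ k) (hkM : k ≤ M) {T : ℝ}
    (hT : 0 < T) (hTk : (k : ℝ) - 1 ≤ T) :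
    ∃ C : ℝ, 0 < C ∧ ∀ x : Fin L → ℝ, (∀ q, 0 ≤ x q) → T < ∑ q, 1 / (1 + x q) →
      ∃ σ : Equiv.Perm (Fin L),
        ∏ j ∈ Finset.univ.filter (fun j : Fin M => (j : ℕ) < k), x (σ (Fin.castLE hML j)) ≤ C := by
  classical
  have hL : (1 : ℝ) ≤ L := by exact_mod_cast hk1.trans (hkM.trans hML)
  set B : ℝ := 2 * L + L / T with hB
  have hLT : 0 < (L : ℝ) / T := by positivity
  have hB1 : 1 ≤ B := by linarith
  refine ⟨B ^ k, by positivity, fun x hx hsum => ⟨Tuple.sort x, ?_⟩⟩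
  have hmono := Tuple.monotone_sort x
  set y : Fin L → ℝ := x ∘ Tuple.sort x with hy
  have hy0 : ∀ i, 0 ≤ y i := fun i => hx _
  have hsumy : T < ∑ i, 1 / (1 + y i) := by
    have : ∑ i, 1 / (1 + y i) = ∑ q, 1 / (1 + x q) :=
      Equiv.sum_comp (Tuple.sort x) fun q => 1 / (1 + x q)
    rwa [this]
  change ∏ j ∈ Finset.univ.filter (fun j : Fin M => (j : ℕ) < k), y (Fin.castLE hML j) ≤ B ^ k
  have hkL : k - 1 < L := by omega
  set last : Fin L := ⟨k - 1, hkL⟩ with hlast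
  set Y := y last with hY
  have hY0 : 0 ≤ Y := hy0 _
  have hle : ∀ i : Fin L, (i : ℕ) < k → y i ≤ Y := fun i hi =>
    hmono (Fin.le_def.2 (show (i : ℕ) ≤ k - 1 by omega))
  set S : Finset (Fin M) := Finset.univ.filter fun j => (j : ℕ) < k with hS
  have hcardS : S.card = k := by
    rw [hS, Fin.card_filter_val_lt]; omega
  rcases le_or_gt Y B with hYB | hYB
  · calc ∏ j ∈ S, y (Fin.castLE hML j) ≤ ∏ _j ∈ S, B := by
          refine Finset.prod_le_prod (fun _ _ => hy0 _) fun j hj => ?_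
          exact (hle _ (by simpa [hS] using hj)).trans hYB
      _ = B ^ k := by rw [Finset.prod_const, hcardS]
  · set F : Finset (Fin L) := Finset.univ.filter fun i => (i : ℕ) < k - 1 with hF
    have hcardF : F.card = k - 1 := by rw [hF, Fin.card_filter_val_lt]; omega
    have hY1 : 0 < 1 + Y := by linarith
    have hsplit : ∑ i, 1 / (1 + y i) ≤ ∑ i ∈ F, 1 / (1 + y i) + L / (1 + Y) := by
      rw [← Finset.sum_filter_add_sum_filter_not Finset.univ (fun i : Fin L => (i : ℕ) < k - 1)]
      gcongr
      calc ∑ i ∈ Finset.univ.filter (fun i : Fin L => ¬ (i : ℕ) < k - 1), 1 / (1 + y i)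
          ≤ ∑ i ∈ Finset.univ.filter (fun i : Fin L => ¬ (i : ℕ) < k - 1), 1 / (1 + Y) := by
            refine Finset.sum_le_sum fun i hi => ?_
            have : Y ≤ y i := hmono (Fin.le_def.2
              (show k - 1 ≤ (i : ℕ) from not_lt.1 (Finset.mem_filter.1 hi).2))
            gcongr
        _ ≤ ∑ i : Fin L, 1 / (1 + Y) :=
            Finset.sum_le_sum_of_subset_of_nonneg (Finset.filter_subset _ _)
              fun _ _ _ => by positivity
        _ = L / (1 + Y) := by simp [div_eq_mul_inv]
    have hdef : ∀ i, 1 - 1 / (1 + y i) = y i / (1 + y i) := by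
      intro i
      have : 1 + y i ≠ 0 := by linarith [hy0 i]
      field_simp
      ring
    have hFsum : ∑ i ∈ F, 1 / (1 + y i) = ((k : ℝ) - 1) - ∑ i ∈ F, y i / (1 + y i) := by
      simp_rw [← hdef]
      rw [Finset.sum_sub_distrib, Finset.sum_const, hcardF, nsmul_eq_mul, Nat.cast_sub hk1]
      push_cast; ring
    have hsmall : ∑ i ∈ F, y i / (1 + y i) < L / (1 + Y) := by linarith
    have hi1 : ∀ i ∈ F, y i / (1 + y i) < L / (1 + Y) := fun i hi =>
      lt_of_le_of_lt (Finset.single_le_sum (f := fun i => y i / (1 + y i))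
        (fun i _ => div_nonneg (hy0 i) (by linarith [hy0 i])) hi) hsmall
    have hYL : 2 * L < Y := by linarith
    -- the smaller values are at most `1`, and at most `2L/Y`
    have hi2 : ∀ i ∈ F, y i ≤ 1 ∧ y i * Y ≤ 2 * L := by
      intro i hi
      have h0 := hy0 i
      have h1 := hi1 i hi
      rw [div_lt_div_iff₀ (by linarith) hY1] at h1
      have h2 : y i ≤ 1 := by
        by_contra! h
        nlinarith
      exact ⟨h2, by nlinarith⟩
    rcases Nat.lt_or_ge 1 k with hk2 | hk2
    · have hMpos : 0 < M := by omega
      set a : Fin M := ⟨0, hMpos⟩ with ha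
      set b : Fin M := ⟨k - 1, by omega⟩ with hb
      have hab : b ≠ a := by simp [ha, hb, Fin.ext_iff]; omega
      have haS : a ∈ S := by simp [hS, ha]; omega
      have hbS : b ∈ S.erase a := by
        refine Finset.mem_erase.2 ⟨hab, ?_⟩
        simp [hS, hb]; omega
      rw [← Finset.mul_prod_erase S _ haS, ← Finset.mul_prod_erase (S.erase a) _ hbS, ← mul_assoc]
      have hbY : y (Fin.castLE hML b) = Y := rfl
      have haF : Fin.castLE hML a ∈ F := by simp [hF, ha]; omega
      have hrest : ∏ j ∈ (S.erase a).erase b, y (Fin.castLE hML j) ≤ 1 := by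
        refine Finset.prod_le_one (fun _ _ => hy0 _) fun j hj => (hi2 _ ?_).1
        rw [Finset.mem_erase, Finset.mem_erase] at hj
        have hj1 : (j : ℕ) ≠ k - 1 := fun h => hj.1 (Fin.ext h)
        have hj2 : (j : ℕ) < k := (Finset.mem_filter.1 hj.2.2).2
        simp only [hF, Finset.mem_filter, Finset.mem_univ, true_and, Fin.val_castLE]
        omega
      rw [hbY]
      calc y (Fin.castLE hML a) * Y * ∏ j ∈ (S.erase a).erase b, y (Fin.castLE hML j)
          ≤ (2 * L) * 1 :=
            mul_le_mul (hi2 _ haF).2 hrest (Finset.prod_nonneg fun _ _ => hy0 _) (by positivity)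
        _ ≤ B := by linarith
        _ ≤ B ^ k := le_self_pow₀ hB1 (by omega)
    · -- a single index: `T < L/(1+Y)` contradicts `Y > L/T`
      exfalso
      have hk : k = 1 := by omega
      have hF0 : F = ∅ := by rw [← Finset.card_eq_zero, hcardF, hk]
      rw [hF0, Finset.sum_empty, zero_add] at hsplit
      have h1 : T < L / (1 + Y) := by linarith
      rw [lt_div_iff₀ hY1] at h1
      have h2 : L / T < Y := by linarith
      rw [div_lt_iff₀ hT] at h2
      nlinarith

/-! ### Logarithmic decay rates -/

/-- A function squeezed between multiples of `ρ^{-d}` and of `ρ^{-dr}`, `r < 1` arbitrary, has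
logarithmic decay rate `-d`. -/
lemma tendsto_log_div_log {f : ℝ → ℝ} {d : ℝ}
    (hlow : ∃ c : ℝ, 0 < c ∧ ∀ ρ : ℝ, 1 ≤ ρ → c * ρ ^ (-d) ≤ f ρ)
    (hup : ∀ r : ℝ, 0 < r → r < 1 → ∃ K : ℝ, 0 < K ∧ ∀ ρ : ℝ, 1 ≤ ρ → f ρ ≤ K * ρ ^ (-(d * r))) :
    Tendsto (fun ρ => Real.log (f ρ) / Real.log ρ) atTop (nhds (-d)) := by
  obtain ⟨c, hc, hlow⟩ := hlow
  have hlog : ∀ a : ℝ, Tendsto (fun ρ => Real.log a / Real.log ρ) atTop (nhds 0) := fun a =>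
    tendsto_const_nhds.div_atTop Real.tendsto_log_atTop
  rw [tendsto_order]
  constructor
  · intro a ha
    filter_upwards [(hlog c).eventually (lt_mem_nhds (show a + d < 0 by linarith)),
      eventually_gt_atTop 1] with ρ h1 hρ
    have hρ0 : 0 < ρ := by linarith
    have hl : 0 < Real.log ρ := Real.log_pos hρ
    have hp : 0 < ρ ^ (-d) := Real.rpow_pos_of_pos hρ0 _
    have h2 := Real.log_le_log (by positivity) (hlow ρ hρ.le)
    rw [Real.log_mul hc.ne' hp.ne', Real.log_rpow hρ0] at h2
    rw [lt_div_iff₀ hl] at h1 ⊢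
    nlinarith
  · intro a ha
    obtain ⟨r, hr0, hr1, hra⟩ : ∃ r : ℝ, 0 < r ∧ r < 1 ∧ -(d * r) < a := by
      have h : Tendsto (fun r : ℝ => -(d * r)) (nhdsWithin 1 (Set.Iio 1)) (nhds (-(d * 1))) :=
        ((continuous_const.mul continuous_id).neg.tendsto (1 : ℝ)).mono_left nhdsWithin_le_nhds
      have h1 := h.eventually (gt_mem_nhds (show -(d * 1) < a by linarith))
      have h2 : ∀ᶠ r : ℝ in nhdsWithin 1 (Set.Iio 1), r ∈ Set.Ioo (0 : ℝ) 1 :=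
        Ioo_mem_nhdsLT one_pos
      obtain ⟨r, h3, h4⟩ := (h1.and h2).exists
      exact ⟨r, h4.1, h4.2, h3⟩
    obtain ⟨K, hK, hup⟩ := hup r hr0 hr1
    filter_upwards [(hlog K).eventually (gt_mem_nhds (show 0 < a + d * r by linarith)),
      eventually_gt_atTop 1] with ρ h1 hρ
    have hρ0 : 0 < ρ := by linarith
    have hl : 0 < Real.log ρ := Real.log_pos hρ
    have hf : 0 < f ρ :=
      lt_of_lt_of_le (mul_pos hc (Real.rpow_pos_of_pos hρ0 _)) (hlow ρ hρ.le)
    have hp : 0 < ρ ^ (-(d * r)) := Real.rpow_pos_of_pos hρ0 _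
    have h2 := Real.log_le_log hf (hup ρ hρ.le)
    rw [Real.log_mul hK.ne' hp.ne', Real.log_rpow hρ0] at h2
    rw [div_lt_iff₀ hl] at h1 ⊢
    nlinarith

/-! ### Two-sided bounds on the outage probability -/

/-- The coordinates `(j, l)` belonging to the first `k` of the evaluation points. -/
def firstCoords (N ν k : ℕ) : Finset (Fin (ν + 1) × Fin N) :=
  (Finset.univ.filter fun j : Fin (ν + 1) => (j : ℕ) < k) ×ˢ Finset.univ

lemma card_first {ν k : ℕ} (hk : k ≤ ν + 1) :
    (Finset.univ.filter fun j : Fin (ν + 1) => (j : ℕ) < k).card = k := by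
  rw [Fin.card_filter_val_lt]; omega

lemma card_firstCoords {N ν k : ℕ} (hk : k ≤ ν + 1) : (firstCoords N ν k).card = k * N := by
  rw [firstCoords, Finset.card_product, card_first hk, Finset.card_univ, Fintype.card_fin]

/-- Outage forces, for one of the finitely many orderings of the frequencies, the product of the
first `k` eigenvalues to be `O(ρ^{-k})`; Markov's inequality for the moment of order `-r` of the
product of all their components then gives the decay `ρ^{-Nkr}`. -/
lemma pout_upper {N ν Ld k : ℕ} (hLd : ν + 1 ≤ Ld) {R : ℝ} (hk1 : 1 ≤ k) (hkν : k ≤ ν + 1)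
    (hkT : (k : ℝ) - 1 ≤ Ld * 2 ^ (-R)) (r : ℝ) (hr0 : 0 < r) (hr1 : r < 1) :
    ∃ K : ℝ, 0 < K ∧ ∀ ρ : ℝ, 1 ≤ ρ →
      PoutSIMO N ν Ld R ρ ≤ K * ρ ^ (-(((N : ℝ) * k) * r)) := by
  have hLd0 : (0 : ℝ) < Ld := by exact_mod_cast (Nat.succ_pos ν).trans_le hLd
  have hT : 0 < (Ld : ℝ) * 2 ^ (-R) := by positivity
  obtain ⟨C, hC, hprod⟩ := exists_small_product hLd hk1 hkν hT hkT
  let w : Equiv.Perm (Fin Ld) → Fin (ν + 1) → ℂ := fun σ j => node Ld (σ (Fin.castLE hLd j))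
  have hw : ∀ σ, Function.Injective (w σ) := fun σ =>
    node_injective.comp (σ.injective.comp (Fin.castLE_injective hLd))
  have hex := fun σ => exists_prob_prod_le (chan N ν (w σ)) (det_chan_ne_zero (hw σ))
    (firstCoords N ν k) hr0 hr1
  choose K hK0 hK using hex
  have hKsum : 0 < ∑ σ, K σ := Finset.sum_pos (fun σ _ => hK0 σ) Finset.univ_nonempty
  refine ⟨(∑ σ, K σ) * ((C ^ N) ^ r), by positivity, fun ρ hρ => ?_⟩
  have hρ0 : 0 < ρ := by linarith
  set t : ℝ := (C / ρ ^ k) ^ N with ht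
  have ht0 : 0 < t := by positivity
  have hsub : {ω | (Ld : ℝ) * 2 ^ (-R) < ∑ q : Fin Ld, 1 / (1 + ρ * lam N ν Ld ω q)} ⊆
      ⋃ σ, {ω | ∏ i ∈ firstCoords N ν k, nsq (chan N ν (w σ) ω i) ≤ t} := by
    intro ω hω
    obtain ⟨σ, hσ⟩ := hprod (fun q => ρ * lam N ν Ld ω q)
      (fun q => mul_nonneg hρ0.le (lam_nonneg ω q)) hω
    refine Set.mem_iUnion.2 ⟨σ, ?_⟩
    simp only [Set.mem_ofPred_eq]
    rw [Finset.prod_mul_distrib, Finset.prod_const, card_first hkν] at hσ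
    have h1 : ∏ j ∈ Finset.univ.filter (fun j : Fin (ν + 1) => (j : ℕ) < k),
        lam N ν Ld ω (σ (Fin.castLE hLd j)) ≤ C / ρ ^ k := by
      rw [le_div_iff₀ (by positivity), mul_comm]; exact hσ
    rw [firstCoords, Finset.prod_product]
    refine le_trans ?_ (pow_le_pow_left₀ (Finset.prod_nonneg fun _ _ => lam_nonneg ω _) h1 N)
    rw [← Finset.prod_pow]
    refine Finset.prod_le_prod (fun _ _ => Finset.prod_nonneg fun _ _ => nsq_nonneg _) fun j _ => ?_
    calc ∏ l : Fin N, nsq (chan N ν (w σ) ω (j, l))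
        ≤ ∏ _l : Fin N, lam N ν Ld ω (σ (Fin.castLE hLd j)) := by
          refine Finset.prod_le_prod (fun _ _ => nsq_nonneg _) fun l _ => ?_
          rw [lam_eq ω (fun j => σ (Fin.castLE hLd j)) j]
          exact Finset.single_le_sum (f := fun l => nsq (chan N ν (w σ) ω (j, l)))
            (fun _ _ => nsq_nonneg _) (Finset.mem_univ l)
      _ = _ := by simp
  have hmeas : matrixLaw (Fin (ν + 1) × Fin N)
      {ω | (Ld : ℝ) * 2 ^ (-R) < ∑ q : Fin Ld, 1 / (1 + ρ * lam N ν Ld ω q)}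
      ≤ ENNReal.ofReal ((∑ σ, K σ) * t ^ r) := by
    refine (measure_mono hsub).trans ((measure_iUnion_fintype_le _ _).trans ?_)
    rw [Finset.sum_mul, ENNReal.ofReal_sum_of_nonneg fun σ _ => by have := hK0 σ; positivity]
    exact Finset.sum_le_sum fun σ _ => hK σ t ht0
  have h2 := ENNReal.toReal_le_of_le_ofReal (by positivity) hmeas
  refine h2.trans (le_of_eq ?_)
  rw [ht, div_pow, Real.div_rpow (by positivity) (by positivity), mul_assoc, div_eq_mul_inv,
    ← pow_mul, ← Real.rpow_natCast ρ, ← Real.rpow_mul hρ0.le, ← Real.rpow_neg hρ0.le]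
  congr 3
  push_cast; ring

/-- If smallness of the first `k` values `b_q` makes more than `T` of the eigenvalues small, outage
has probability at least of order `ρ^{-Nk}`. -/
lemma pout_lower {N ν Ld k : ℕ} (hLd : ν + 1 ≤ Ld) {R : ℝ} (hkν : k ≤ ν + 1)
    (Q : Finset (Fin Ld)) (hQ : (Ld : ℝ) * 2 ^ (-R) < Q.card)
    (hlam : ∀ q ∈ Q, ∃ D : ℝ, 0 < D ∧ ∀ (ω : Fin (ν + 1) × Fin N → ℝ × ℝ) (τ : ℝ), 0 ≤ τ →
      (∀ i ∈ firstCoords N ν k, ‖chan N ν (fun j => node Ld (Fin.castLE hLd j)) ω i‖ ≤ τ) →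
        lam N ν Ld ω q ≤ D * τ ^ 2) :
    ∃ c : ℝ, 0 < c ∧ ∀ ρ : ℝ, 1 ≤ ρ →
      c * ρ ^ (-((N : ℝ) * k)) ≤ PoutSIMO N ν Ld R ρ := by
  classical
  have hLd0 : (0 : ℝ) < Ld := by exact_mod_cast (Nat.succ_pos ν).trans_le hLd
  set T : ℝ := (Ld : ℝ) * 2 ^ (-R) with hT
  have hT0 : 0 < T := by positivity
  have hlam' : ∀ q, ∃ D : ℝ, 0 < D ∧ (q ∈ Q → ∀ (ω : Fin (ν + 1) × Fin N → ℝ × ℝ) (τ : ℝ), 0 ≤ τ →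
      (∀ i ∈ firstCoords N ν k, ‖chan N ν (fun j => node Ld (Fin.castLE hLd j)) ω i‖ ≤ τ) →
        lam N ν Ld ω q ≤ D * τ ^ 2) := by
    intro q
    by_cases hq : q ∈ Q
    · obtain ⟨D, hD, h⟩ := hlam q hq
      exact ⟨D, hD, fun _ => h⟩
    · exact ⟨1, one_pos, fun h => absurd h hq⟩
  choose D hD0 hD using hlam'
  set DD : ℝ := 1 + ∑ q, D q with hDD
  have hDle : ∀ q, D q ≤ DD := fun q => by
    have := Finset.single_le_sum (f := D) (fun q _ => (hD0 q).le) (Finset.mem_univ q)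
    linarith
  have hDD0 : 0 < DD := by
    have : 0 ≤ ∑ q, D q := Finset.sum_nonneg fun q _ => (hD0 q).le
    linarith
  -- `δ` is chosen so that `Q.card / (1 + DD δ²) > T`
  obtain ⟨δ, hδ0, hδ1, hδ⟩ : ∃ δ : ℝ, 0 < δ ∧ δ ≤ 1 ∧ T * (1 + DD * δ ^ 2) < Q.card := by
    have h : Tendsto (fun δ : ℝ => T * (1 + DD * δ ^ 2)) (nhdsWithin 0 (Set.Ioi 0))
        (nhds (T * (1 + DD * 0 ^ 2))) :=
      (Continuous.tendsto (by fun_prop) 0).mono_left nhdsWithin_le_nhds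
    have h1 := h.eventually (gt_mem_nhds (show T * (1 + DD * 0 ^ 2) < Q.card by simpa using hQ))
    have h2 : ∀ᶠ δ : ℝ in nhdsWithin 0 (Set.Ioi 0), δ ∈ Set.Ioo (0 : ℝ) 1 :=
      Ioo_mem_nhdsGT one_pos
    obtain ⟨δ, h3, h4⟩ := (h1.and h2).exists
    exact ⟨δ, h4.1, h4.2.le, h3⟩
  have hw : Function.Injective fun j : Fin (ν + 1) => node Ld (Fin.castLE hLd j) :=
    node_injective.comp (Fin.castLE_injective hLd)
  obtain ⟨K, hK0, hK⟩ := exists_prob_box_ge (chan N ν _) (det_chan_ne_zero (N := N) hw)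
  refine ⟨K * (δ ^ 2) ^ (k * N), by positivity, fun ρ hρ => ?_⟩
  have hρ0 : 0 < ρ := by linarith
  set τ : ℝ := δ / √ρ with hτ
  have hτ0 : 0 < τ := by positivity
  have hτ1 : τ ≤ 1 := (div_le_one (by positivity)).2 (hδ1.trans (Real.one_le_sqrt.2 hρ))
  have hτ2 : τ ^ 2 = δ ^ 2 / ρ := by rw [hτ, div_pow, Real.sq_sqrt hρ0.le]
  have hbox := hK (fun i => if i ∈ firstCoords N ν k then τ else 1)
    (fun i => by split_ifs <;> linarith) (fun i => by split_ifs <;> linarith)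
  have hsub : {ω | ∀ i, ‖chan N ν (fun j => node Ld (Fin.castLE hLd j)) ω i‖ ≤
      if i ∈ firstCoords N ν k then τ else 1} ⊆
      {ω | T < ∑ q : Fin Ld, 1 / (1 + ρ * lam N ν Ld ω q)} := by
    intro ω hω
    simp only [Set.mem_ofPred_eq] at hω ⊢
    have h1 : ∀ q ∈ Q, 1 / (1 + DD * δ ^ 2) ≤ 1 / (1 + ρ * lam N ν Ld ω q) := by
      intro q hq
      have h2 := hD q hq ω τ hτ0.le fun i hi => by simpa [hi] using hω i
      have h3 : ρ * lam N ν Ld ω q ≤ DD * δ ^ 2 := by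
        calc ρ * lam N ν Ld ω q ≤ ρ * (DD * τ ^ 2) := by
              gcongr
              exact h2.trans (mul_le_mul_of_nonneg_right (hDle q) (sq_nonneg _))
          _ = DD * δ ^ 2 := by rw [hτ2]; field_simp
      have h4 := mul_nonneg hρ0.le (lam_nonneg ω q)
      exact one_div_le_one_div_of_le (by linarith) (by linarith)
    calc T < Q.card * (1 / (1 + DD * δ ^ 2)) := by
          rw [mul_one_div, lt_div_iff₀ (by positivity)]; exact hδ
      _ = ∑ _q ∈ Q, 1 / (1 + DD * δ ^ 2) := by rw [Finset.sum_const, nsmul_eq_mul]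
      _ ≤ ∑ q ∈ Q, 1 / (1 + ρ * lam N ν Ld ω q) := Finset.sum_le_sum h1
      _ ≤ _ := Finset.sum_le_sum_of_subset_of_nonneg (Finset.subset_univ _) fun q _ _ => by
          have := mul_nonneg hρ0.le (lam_nonneg ω q)
          positivity
  have hfin : matrixLaw (Fin (ν + 1) × Fin N)
      {ω | T < ∑ q : Fin Ld, 1 / (1 + ρ * lam N ν Ld ω q)} ≠ ∞ := by
    have : IsProbabilityMeasure (matrixLaw (Fin (ν + 1) × Fin N)) := by
      unfold matrixLaw; infer_instance
    exact measure_ne_top _ _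
  have h5 := (ENNReal.ofReal_le_iff_le_toReal hfin).1 (hbox.trans (measure_mono hsub))
  refine le_trans (le_of_eq ?_) h5
  have hprodτ : ∏ i : Fin (ν + 1) × Fin N, (if i ∈ firstCoords N ν k then τ else 1) ^ 2
      = (τ ^ 2) ^ (k * N) := by
    rw [Finset.prod_pow, Finset.prod_ite_mem, Finset.univ_inter, Finset.prod_const,
      card_firstCoords hkν, ← pow_mul, ← pow_mul, mul_comm]
  rw [hprodτ, hτ2, div_pow, mul_assoc, div_eq_mul_inv, Real.rpow_neg hρ0.le,
    ← Real.rpow_natCast ρ]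
  push_cast
  rw [mul_comm (k : ℝ)]

/-- Each eigenvalue is a bounded quadratic form of the channel taps. -/
lemma exists_lam_le_norm {N ν Ld : ℕ} (q : Fin Ld) :
    ∃ D : ℝ, 0 < D ∧ ∀ ω : Fin (ν + 1) × Fin N → ℝ × ℝ, lam N ν Ld ω q ≤ D * ‖ω‖ ^ 2 := by
  let B := LinearMap.toContinuousLinearMap (chan N ν fun _ => node Ld q)
  refine ⟨N * (2 * ‖B‖ ^ 2) + 1, by positivity, fun ω => ?_⟩
  rw [lam_eq ω (fun _ => q) 0]
  calc ∑ l, nsq (chan N ν (fun _ => node Ld q) ω (0, l)) ≤ ∑ _l : Fin N, 2 * (‖B‖ * ‖ω‖) ^ 2 := by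
        refine Finset.sum_le_sum fun l _ => (nsq_le _).trans ?_
        have : ‖B ω (0, l)‖ ≤ ‖B‖ * ‖ω‖ := (norm_le_pi_norm (B ω) _).trans (B.le_opNorm ω)
        change 2 * ‖B ω (0, l)‖ ^ 2 ≤ _
        gcongr
    _ = N * (2 * ‖B‖ ^ 2) * ‖ω‖ ^ 2 := by
        rw [Finset.sum_const, Finset.card_univ, Fintype.card_fin, nsmul_eq_mul]; ring
    _ ≤ _ := by nlinarith [sq_nonneg ‖ω‖]

/-- In a SIMO quasi-static frequency-selective channel with memory `ν`, `N` receive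
antennas and data block length `L_d ≥ ν+1`, the MMSE receiver diversity under
cyclic-prefix transmission is `N·min(ν+1, ⌊2^{−R}·L_d⌋ + 1)`: for every fixed rate
`R > 0`, `lim_{ρ→∞} log P_out(ρ) / log ρ = −N·min(ν+1, ⌊2^{−R}·L_d⌋ + 1)`. -/
theorem simo_cp_mmse_diversity (N ν Ld : ℕ) (hN : 1 ≤ N) (hLd : ν + 1 ≤ Ld)
    (R : ℝ) (hR : 0 < R) :
    Tendsto (fun ρ : ℝ => Real.log (PoutSIMO N ν Ld R ρ) / Real.log ρ) atTop
      (nhds (-((N : ℝ) *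
        min ((ν : ℝ) + 1) ((⌊(2 : ℝ) ^ (-R) * Ld⌋ : ℝ) + 1)))) := by
  set T : ℝ := (Ld : ℝ) * 2 ^ (-R) with hT
  have hLd0 : (0 : ℝ) < Ld := by exact_mod_cast (Nat.succ_pos ν).trans_le hLd
  have hT0 : 0 < T := by positivity
  have hTLd : T < Ld := by
    have : (2 : ℝ) ^ (-R) < 1 := Real.rpow_lt_one_of_one_lt_of_neg one_lt_two (by linarith)
    nlinarith
  set m : ℕ := ⌊T⌋₊ with hm
  have hmT : (m : ℝ) ≤ T := Nat.floor_le hT0.le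
  have hTm : T < m + 1 := Nat.lt_floor_add_one T
  set k : ℕ := min (ν + 1) (m + 1) with hk
  have hk1 : 1 ≤ k := by omega
  have hkν : k ≤ ν + 1 := by omega
  have hkm : (k : ℝ) ≤ m + 1 := by exact_mod_cast (min_le_right _ _ : k ≤ m + 1)
  have hkey : (N : ℝ) * min ((ν : ℝ) + 1) ((⌊(2 : ℝ) ^ (-R) * Ld⌋ : ℝ) + 1) = N * k := by
    have h1 : ((⌊(2 : ℝ) ^ (-R) * Ld⌋ : ℤ) : ℝ) = m := by
      rw [mul_comm, ← hT, hm, ← Int.natCast_floor_eq_floor hT0.le]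
      simp
    rw [h1, hk]
    push_cast
    rfl
  rw [hkey]
  refine tendsto_log_div_log ?_ fun r hr0 hr1 => pout_upper hLd hk1 hkν (by linarith) r hr0 hr1
  rcases le_total (m + 1) (ν + 1) with hmν | hmν
  · -- the first `k = ⌊T⌋ + 1` eigenvalues are themselves the small ones
    have hkeq : k = m + 1 := min_eq_right hmν
    have hcard : (Finset.univ.filter fun q : Fin Ld => (q : ℕ) < k).card = k := by
      rw [Fin.card_filter_val_lt]; omega
    refine pout_lower hLd hkν (Finset.univ.filter fun q : Fin Ld => (q : ℕ) < k) ?_ ?_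
    · rw [hcard, hkeq]; push_cast; exact hTm
    · intro q hq
      have hqk : (q : ℕ) < k := by simpa using hq
      refine ⟨N * 2, by have : (0 : ℝ) < N := by exact_mod_cast hN
                        positivity, fun ω τ hτ h => ?_⟩
      let j : Fin (ν + 1) := ⟨q, by omega⟩
      have hj : q = Fin.castLE hLd j := rfl
      rw [hj, lam_eq ω (fun j => Fin.castLE hLd j) j]
      calc _ ≤ ∑ _l : Fin N, 2 * τ ^ 2 := by
            refine Finset.sum_le_sum fun l _ => (nsq_le _).trans ?_
            have := h (j, l) (by simp [firstCoords, j, hqk])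
            gcongr
        _ = N * 2 * τ ^ 2 := by
            rw [Finset.sum_const, Finset.card_univ, Fintype.card_fin, nsmul_eq_mul]; ring
  · -- all `ν + 1` values are small, hence so are the taps and every eigenvalue
    have hkeq : k = ν + 1 := min_eq_left hmν
    refine pout_lower hLd hkν Finset.univ (by simpa using hTLd) fun q _ => ?_
    have hw : Function.Injective fun j : Fin (ν + 1) => node Ld (Fin.castLE hLd j) :=
      node_injective.comp (Fin.castLE_injective hLd)
    have hker : LinearMap.ker (chan N ν fun j => node Ld (Fin.castLE hLd j)) = ⊥ := by
      by_contra h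
      exact det_chan_ne_zero hw (LinearMap.det_eq_zero_iff_ker_ne_bot.2 h)
    obtain ⟨L, hL0, hL⟩ := LinearMap.exists_antilipschitzWith _ hker
    have hL0' : (0 : ℝ) < L := hL0
    obtain ⟨D, hD0, hD⟩ := exists_lam_le_norm (N := N) (ν := ν) q
    refine ⟨D * L ^ 2, by positivity, fun ω τ hτ h => (hD ω).trans ?_⟩
    have h1 : ‖chan N ν (fun j => node Ld (Fin.castLE hLd j)) ω‖ ≤ τ :=
      (pi_norm_le_iff_of_nonneg hτ).2 fun i => h i (by simp [firstCoords, hkeq]; omega)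
    have h2 : ‖ω‖ ≤ L * ‖chan N ν (fun j => node Ld (Fin.castLE hLd j)) ω‖ := by
      have := hL.le_mul_dist ω 0
      simpa using this
    have h3 : ‖ω‖ ≤ L * τ := h2.trans (by gcongr)
    calc D * ‖ω‖ ^ 2 ≤ D * (L * τ) ^ 2 := by gcongr
      _ = D * L ^ 2 * τ ^ 2 := by ring

end
end

section
/- In a SIMO quasi-static frequency-selective channel with memory ν, N receive antennas and data block length L_d = ν+1, the MMSE receiver diversity under cyclic-prefix transmission is N·(⌊L_d·2^{−R}⌋ + 1): for every fixed rate R > 0, lim_{ρ→∞} log P_out(ρ) / log ρ = −N·(⌊L_d·2^{−R}⌋ + 1). -/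
/-!
Write `L = ν + 1`, `c = L 2^{-R}` and `k = ⌊c⌋`, so that `0 < c < L` and `k < L`.

By Parseval, the normalised discrete Fourier transform is an isometry, and hence preserves the
standard complex Gaussian law (`map_pi_cGauss`). The outage event can therefore be expressed with
`λ_q = L ∑_l |z_{q,l}|²` for i.i.d. standard complex Gaussian `z_{q,l}` (`PoutSIMO_eq`).

*Lower bound.* Outage holds when `k + 1` of the `λ_q` are at most `δ / ρ` with
`(k + 1) / (1 + δ) > c`. This asks `(k + 1) N` independent entries to have squared modulus
`O(1 / ρ)`, an event of probability at least a constant times `ρ^{-(k + 1) N}` (`outage_lower`).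

*Upper bound.* When `c` is an integer, outage does not force `k + 1` of the `ρ λ_q` to be bounded,
but it does bound the product of the `k + 1` smallest of them (`exists_small_prod`). Since `λ_q`
dominates `|Re z_{q,l}| |Im z_{q,l}|` for each `l`, a product of `(k + 1) N` independent variables
is `O(ρ^{-(k + 1) N})`, each of which has finite moments of order `-σ` for `σ < 1`. Markov's
inequality gives a bound of order `ρ^{-(k + 1) N σ}` (`outage_upper`), and `σ` is arbitrarily close
to `1`.
-/

open MeasureTheory ProbabilityTheory Filter

noncomputable section

/-! ### The Gaussian law and its rotation invariance -/

/-- The law `CN(0, 1)` of a standard complex Gaussian entry, as a measure on `ℂ`. -/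
def cGauss : Measure ℂ := entryLaw.map toC

lemma measurable_toC : Measurable toC := by
  have : toC = fun p => Complex.measurableEquivRealProd.symm p := by
    ext p; simp [toC]
  rw [this]; fun_prop

instance : IsProbabilityMeasure cGauss :=
  Measure.isProbabilityMeasure_map measurable_toC.aemeasurable

lemma map_matrixLaw (ι : Type*) [Fintype ι] :
    (matrixLaw ι).map (fun ω i => toC (ω i)) = Measure.pi (fun _ : ι => cGauss) := by
  unfold matrixLaw cGauss
  exact Measure.pi_map_pi (fun _ => measurable_toC.aemeasurable)

lemma charFun_cGauss (t : ℂ) : charFun cGauss t = Complex.exp (-(‖t‖ ^ 2 / 4 : ℝ)) := by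
  have h1 := charFun_gaussianReal (μ := 0) (v := 1 / 2)
  rw [cGauss, charFun_apply, integral_map measurable_toC.aemeasurable (by fun_prop)]
  have h2 : ∀ p : ℝ × ℝ, Complex.exp (inner ℝ (toC p) t * Complex.I)
      = Complex.exp (t.re * p.1 * Complex.I) * Complex.exp (t.im * p.2 * Complex.I) := by
    intro p
    rw [← Complex.exp_add]
    congr 1
    simp only [Complex.inner, toC, Complex.mul_re, Complex.conj_re, Complex.conj_im]
    push_cast; ring
  simp_rw [h2]
  rw [entryLaw, integral_prod_mul (fun x : ℝ => Complex.exp (t.re * x * Complex.I))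
    (fun x : ℝ => Complex.exp (t.im * x * Complex.I)), ← charFun_apply_real, ← charFun_apply_real,
    h1, h1, ← Complex.exp_add]
  congr 1
  rw [← Complex.normSq_eq_norm_sq, Complex.normSq_apply]
  push_cast; ring_nf

/-- A real-linear map preserving the Euclidean norm preserves the standard complex Gaussian law:
the characteristic function of that law depends on the norm only. -/
lemma map_pi_cGauss {ι : Type*} [Fintype ι] (T : (ι → ℂ) →ₗ[ℝ] (ι → ℂ))
    (hT : ∀ x, ∑ i, Complex.normSq (T x i) = ∑ i, Complex.normSq (x i)) :
    (Measure.pi (fun _ : ι => cGauss)).map T = Measure.pi (fun _ : ι => cGauss) := by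
  classical
  -- `ι → ℂ` carries the sup norm, so `T` is transported to `PiLp 2`, where it is an isometry.
  let e : PiLp 2 (fun _ : ι => ℂ) ≃ₗ[ℝ] (ι → ℂ) := WithLp.linearEquiv 2 ℝ (ι → ℂ)
  let T0 : PiLp 2 (fun _ : ι => ℂ) →ₗᵢ[ℝ] PiLp 2 (fun _ : ι => ℂ) :=
    { toLinearMap := e.symm.toLinearMap ∘ₗ T ∘ₗ e.toLinearMap
      norm_map' := by
        intro x
        rw [PiLp.norm_eq_of_L2, PiLp.norm_eq_of_L2]
        congr 1
        simp_rw [← Complex.normSq_eq_norm_sq]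
        exact hT _ }
  let T1 := T0.toLinearIsometryEquiv rfl
  have hTm : Measurable T := (LinearMap.continuous_of_finiteDimensional T).measurable
  have : IsProbabilityMeasure ((Measure.pi (fun _ : ι => cGauss)).map T) :=
    Measure.isProbabilityMeasure_map hTm.aemeasurable
  rw [← charFun_eq_pi_iff]
  intro t
  have hc : ∀ s : PiLp 2 (fun _ : ι => ℂ),
      charFun ((Measure.pi (fun _ : ι => cGauss)).map (WithLp.toLp 2)) s
      = Complex.exp (-(‖s‖ ^ 2 / 4 : ℝ)) := by
    intro s
    rw [charFun_pi]
    simp_rw [charFun_cGauss]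
    rw [← Complex.exp_sum, PiLp.norm_sq_eq_of_L2, Finset.sum_div]
    push_cast
    rw [Finset.sum_neg_distrib]
  have hm : Measurable (WithLp.toLp 2 : (ι → ℂ) → PiLp 2 (fun _ : ι => ℂ)) := by fun_prop
  have h3 : ((Measure.pi (fun _ : ι => cGauss)).map T).map (WithLp.toLp 2)
      = ((Measure.pi (fun _ : ι => cGauss)).map (WithLp.toLp 2)).map T1 := by
    rw [Measure.map_map hm hTm, Measure.map_map T1.continuous.measurable hm]
    rfl
  have h4 : charFun (((Measure.pi (fun _ : ι => cGauss)).map T).map (WithLp.toLp 2)) t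
      = charFun ((Measure.pi (fun _ : ι => cGauss)).map (WithLp.toLp 2)) (T1.symm t) := by
    rw [h3, charFun_apply, integral_map T1.continuous.measurable.aemeasurable (by fun_prop),
      charFun_apply]
    congr 1
    ext x
    rw [← T1.inner_map_map x, T1.apply_symm_apply]
  rw [h4, hc, T1.symm.norm_map, ← hc, charFun_pi]

/-- Orthogonality of the columns of the `L × L` discrete Fourier matrix. -/
lemma dft_orth (L : ℕ) (n m : Fin L) :
    ∑ q : Fin L, Complex.exp (-(2 * (Real.pi : ℂ) * Complex.I * ((n : ℕ) : ℂ) * ((q : ℕ) : ℂ))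
        / (L : ℂ)) * (starRingEnd ℂ) (Complex.exp (-(2 * (Real.pi : ℂ) * Complex.I
          * ((m : ℕ) : ℂ) * ((q : ℕ) : ℂ)) / (L : ℂ))) = if n = m then (L : ℂ) else 0 := by
  have hL : (L : ℂ) ≠ 0 := by
    have := n.pos
    exact_mod_cast this.ne'
  set η : ℂ := Complex.exp (2 * (Real.pi : ℂ) * Complex.I * ((m : ℕ) - (n : ℕ)) / L) with hη
  have h1 : ∀ q : Fin L, Complex.exp (-(2 * (Real.pi : ℂ) * Complex.I * ((n : ℕ) : ℂ)
        * ((q : ℕ) : ℂ)) / (L : ℂ)) * (starRingEnd ℂ) (Complex.exp (-(2 * (Real.pi : ℂ) * Complex.I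
          * ((m : ℕ) : ℂ) * ((q : ℕ) : ℂ)) / (L : ℂ))) = η ^ (q : ℕ) := by
    intro q
    rw [← Complex.exp_conj, ← Complex.exp_add, hη, ← Complex.exp_nat_mul]
    congr 1
    simp
    rw [show (starRingEnd ℂ) 2 = 2 from Complex.conj_ofNat 2]
    ring
  simp_rw [h1]
  rw [Fin.sum_univ_eq_sum_range (fun q => η ^ q)]
  split_ifs with h
  · subst h
    simp [hη]
  · have hne : η ≠ 1 := by
      intro h1
      rw [hη, Complex.exp_eq_one_iff] at h1
      obtain ⟨k, hk⟩ := h1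
      have h2pi : (2 * (Real.pi : ℂ) * Complex.I) ≠ 0 := Complex.two_pi_I_ne_zero
      have h3 : ((m : ℕ) - (n : ℕ) : ℂ) = k * L := by
        field_simp at hk
        apply mul_left_cancel₀ h2pi
        linear_combination (2 * (Real.pi : ℂ) * Complex.I) * hk
      have h4 : ((m : ℕ) - (n : ℕ) : ℤ) = k * L := by exact_mod_cast h3
      have hm := m.isLt
      have hn := n.isLt
      have h5 : k = 0 := by
        by_contra hk0
        rcases lt_or_gt_of_ne hk0 with hk1 | hk1
        · have : k ≤ -1 := by omega
          nlinarith
        · have : 1 ≤ k := by omega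
          nlinarith
      subst h5
      apply h
      ext
      omega
    rw [geom_sum_eq hne]
    have : η ^ L = 1 := by
      rw [hη, ← Complex.exp_nat_mul, Complex.exp_eq_one_iff]
      refine ⟨(m : ℕ) - (n : ℕ), ?_⟩
      push_cast
      field_simp
    rw [this]; simp

/-- Parseval's identity for the discrete Fourier transform of length `L`. -/
lemma dft_parseval (L : ℕ) (a : Fin L → ℂ) :
    ∑ q : Fin L, Complex.normSq (∑ n : Fin L, a n *
      Complex.exp (-(2 * (Real.pi : ℂ) * Complex.I * ((n : ℕ) : ℂ) * ((q : ℕ) : ℂ)) / (L : ℂ)))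
    = L * ∑ n, Complex.normSq (a n) := by
  have hr : ∀ w : Fin L → Fin L → ℂ,
      (∀ n m, ∑ q, w n q * (starRingEnd ℂ) (w m q) = if n = m then (L : ℂ) else 0) →
      ∑ q : Fin L, Complex.normSq (∑ n : Fin L, a n * w n q) = L * ∑ n, Complex.normSq (a n) := by
    intro w hw
    have : ((∑ q : Fin L, Complex.normSq (∑ n : Fin L, a n * w n q) : ℝ) : ℂ)
        = ((L * ∑ n, Complex.normSq (a n) : ℝ) : ℂ) := by
      push_cast
      simp_rw [← Complex.mul_conj, map_sum, map_mul, Finset.sum_mul_sum]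
      rw [Finset.sum_comm]
      rw [Finset.mul_sum]
      refine Finset.sum_congr rfl fun n _ => ?_
      rw [Finset.sum_comm]
      have : ∀ m, ∑ q, a n * w n q * ((starRingEnd ℂ) (a m) * (starRingEnd ℂ) (w m q))
          = a n * (starRingEnd ℂ) (a m) * (if n = m then (L : ℂ) else 0) := by
        intro m
        rw [← hw, Finset.mul_sum]
        refine Finset.sum_congr rfl fun q _ => by ring
      simp_rw [this]
      simp
      ring
    exact_mod_cast this
  exact hr _ (dft_orth L)

/-! ### Diagonalisation of the channel by the discrete Fourier transform -/

/-- The entries of `b_1, …, b_L` divided by `√L` (with `L = ν + 1`) are again i.i.d. `CN(0, 1)`,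
so `λ_q` may be replaced by `L` times the sum of `N` independent `|CN(0, 1)|²` variables. -/
lemma PoutSIMO_eq (N ν : ℕ) (R ρ : ℝ) :
    PoutSIMO N ν (ν + 1) R ρ = ((Measure.pi fun _ : Fin (ν + 1) × Fin N => cGauss)
      {z | ((ν + 1 : ℕ) : ℝ) * 2 ^ (-R) < ∑ q : Fin (ν + 1),
        1 / (1 + ρ * (((ν + 1 : ℕ) : ℝ) * ∑ l : Fin N, Complex.normSq (z (q, l))))}).toReal := by
  set L := ν + 1 with hL
  have hL0 : (0 : ℝ) < (L : ℝ) := by positivity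
  set w : Fin L → Fin L → ℂ := fun n q =>
    Complex.exp (-(2 * (Real.pi : ℂ) * Complex.I * ((n : ℕ) : ℂ) * ((q : ℕ) : ℂ)) / (L : ℂ)) with hw
  -- The normalised Fourier transform along the taps, for each antenna.
  let T : (Fin L × Fin N → ℂ) →ₗ[ℝ] (Fin L × Fin N → ℂ) :=
    { toFun := fun z p => ((√(L : ℝ))⁻¹ : ℝ) • ∑ n : Fin L, z (n, p.2) * w n p.1
      map_add' := by
        intro x y; ext p
        simp [add_mul, Finset.sum_add_distrib]
      map_smul' := by
        intro c x; ext p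
        simp [Finset.mul_sum, mul_assoc, mul_left_comm] }
  have hTn : ∀ z p, (L : ℝ) * Complex.normSq (T z p)
      = Complex.normSq (∑ n : Fin L, z (n, p.2) * w n p.1) := by
    intro z p
    change (L : ℝ) * Complex.normSq (((√(L : ℝ))⁻¹ : ℝ) • ∑ n : Fin L, z (n, p.2) * w n p.1) = _
    rw [Complex.real_smul, Complex.normSq_mul, Complex.normSq_ofReal, ← mul_inv,
      Real.mul_self_sqrt hL0.le, ← mul_assoc, mul_inv_cancel₀ hL0.ne', one_mul]
  have hT : ∀ z, ∑ i, Complex.normSq (T z i) = ∑ i, Complex.normSq (z i) := by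
    intro z
    apply mul_left_cancel₀ hL0.ne'
    rw [Finset.mul_sum]
    simp_rw [hTn]
    rw [Fintype.sum_prod_type, Fintype.sum_prod_type, Finset.sum_comm, Finset.sum_comm (γ := Fin L),
      Finset.mul_sum]
    exact Finset.sum_congr rfl fun l _ => dft_parseval L (fun n => z (n, l))
  have hTm : Measurable T := (LinearMap.continuous_of_finiteDimensional T).measurable
  have hCm : Measurable (fun (ω : Fin L × Fin N → ℝ × ℝ) i => toC (ω i)) :=
    measurable_pi_lambda _ fun i => measurable_toC.comp (measurable_pi_apply i)
  have hms : MeasurableSet {z : Fin L × Fin N → ℂ | (L : ℝ) * 2 ^ (-R) < ∑ q : Fin L,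
        1 / (1 + ρ * ((L : ℝ) * ∑ l : Fin N, Complex.normSq (z (q, l))))} := by
    apply measurableSet_lt measurable_const
    refine Finset.measurable_sum _ fun q _ => ?_
    have : Measurable fun z : Fin L × Fin N → ℂ => ∑ l : Fin N, Complex.normSq (z (q, l)) :=
      Finset.measurable_sum _ fun l _ =>
        Complex.continuous_normSq.measurable.comp (measurable_pi_apply _)
    exact measurable_const.div (measurable_const.add (measurable_const.mul
      (measurable_const.mul this)))
  rw [← map_pi_cGauss T hT, ← map_matrixLaw, Measure.map_apply hTm hms,
    Measure.map_apply hCm (hTm hms)]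
  unfold PoutSIMO
  congr 2
  ext ω
  simp only [Set.mem_ofPred_eq, Set.mem_preimage, Finset.mul_sum, hTn, lam]
  rfl

/-! ### Estimates for a single entry -/

lemma integrable_abs_rpow (σ : ℝ) (h1 : σ < 1) :
    Integrable (fun x : ℝ => |x| ^ (-σ) * Real.exp (-1 * |x| ^ 2)) := by
  have h := integrableOn_rpow_mul_exp_neg_mul_sq (b := 1) one_pos (s := -σ) (by linarith)
  have hI : IntegrableOn (fun x : ℝ => |x| ^ (-σ) * Real.exp (-1 * |x| ^ 2)) (Set.Ioi 0) := by
    refine h.congr_fun (fun x hx => ?_) measurableSet_Ioi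
    simp only [abs_of_pos (show (0 : ℝ) < x from hx)]
  have hJ : IntegrableOn (fun x : ℝ => |x| ^ (-σ) * Real.exp (-1 * |x| ^ 2)) (Set.Iic 0) := by
    rw [← Measure.map_neg_eq_self (volume : Measure ℝ)]
    let m : MeasurableEmbedding fun x : ℝ => -x := (Homeomorph.neg ℝ).measurableEmbedding
    rw [m.integrableOn_map_iff]
    simp_rw [Function.comp_def, abs_neg, Set.neg_preimage, Set.neg_Iic, neg_zero]
    exact Iff.mpr integrableOn_Ici_iff_integrableOn_Ioi hI
  rw [← integrableOn_univ, ← Set.Iic_union_Ioi (a := (0 : ℝ))]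
  exact hJ.union hI

lemma gaussian_pdf_half (x : ℝ) :
    gaussianPDFReal 0 (1 / 2) x = (√Real.pi)⁻¹ * Real.exp (-1 * |x| ^ 2) := by
  rw [gaussianPDFReal]
  simp
  field_simp

lemma lintegral_gaussian_rpow (σ : ℝ) (h1 : σ < 1) :
    ∫⁻ x, ‖x‖ₑ ^ (-σ) ∂(gaussianReal 0 (1 / 2)) < ⊤ := by
  rw [gaussianReal_of_var_ne_zero 0 (by simp),
    lintegral_withDensity_eq_lintegral_mul _ (measurable_gaussianPDF _ _) (by fun_prop)]
  have hi := ((integrable_abs_rpow σ h1).const_mul (√Real.pi)⁻¹).lintegral_lt_top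
  refine lt_of_le_of_lt (le_of_eq (lintegral_congr_ae ?_)) hi
  have : ∀ᵐ x : ℝ, x ≠ 0 := by simp [ae_iff]
  filter_upwards [this] with x hx
  simp only [Pi.mul_apply, gaussianPDF, gaussian_pdf_half]
  rw [Real.enorm_eq_ofReal_abs, ENNReal.ofReal_rpow_of_pos (abs_pos.2 hx),
    ← ENNReal.ofReal_mul (by positivity)]
  ring_nf

/-- Negative moments of `|Re z| |Im z|` of every order below `1` are finite. In `ℝ≥0∞` the
integrand is `⊤` on the coordinate axes, a null set. -/
lemma lintegral_cGauss_rpow (σ : ℝ) (h1 : σ < 1) :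
    ∫⁻ z, (‖z.re‖ₑ * ‖z.im‖ₑ) ^ (-σ) ∂cGauss < ⊤ := by
  rw [cGauss, lintegral_map (by fun_prop) measurable_toC, entryLaw]
  have : ∀ p : ℝ × ℝ, (‖(toC p).re‖ₑ * ‖(toC p).im‖ₑ) ^ (-σ) = ‖p.1‖ₑ ^ (-σ) * ‖p.2‖ₑ ^ (-σ) := by
    intro p
    rw [ENNReal.mul_rpow_of_ne_top enorm_ne_top enorm_ne_top]
    rfl
  simp_rw [this]
  rw [lintegral_prod_mul (f := fun x : ℝ => ‖x‖ₑ ^ (-σ)) (g := fun x : ℝ => ‖x‖ₑ ^ (-σ))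
    (by fun_prop) (by fun_prop)]
  exact ENNReal.mul_lt_top (lintegral_gaussian_rpow σ h1) (lintegral_gaussian_rpow σ h1)

lemma gaussian_Icc_lower (a : ℝ) (ha : 0 ≤ a) (ha1 : a ≤ 1) :
    ENNReal.ofReal (a * ((√Real.pi)⁻¹ * Real.exp (-1)))
      ≤ gaussianReal 0 (1 / 2) (Set.Icc (-a) a) := by
  rw [gaussianReal_of_var_ne_zero 0 (by simp), withDensity_apply _ measurableSet_Icc]
  calc _ ≤ ∫⁻ x in Set.Icc (-a) a, ENNReal.ofReal ((√Real.pi)⁻¹ * Real.exp (-1)) := by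
        rw [setLIntegral_const, Real.volume_Icc, ← ENNReal.ofReal_mul (by positivity)]
        apply ENNReal.ofReal_le_ofReal
        have : 0 ≤ (√Real.pi)⁻¹ * Real.exp (-1) := by positivity
        nlinarith
    _ ≤ _ := by
        refine setLIntegral_mono (measurable_gaussianPDF _ _) fun x hx => ?_
        rw [gaussianPDF, gaussian_pdf_half]
        apply ENNReal.ofReal_le_ofReal
        have : |x| ≤ 1 := (abs_le.2 ⟨hx.1, hx.2⟩).trans ha1
        gcongr
        nlinarith [abs_nonneg x]

/-- A disc of squared radius `t ≤ 1` has Gaussian mass at least of order `t`. -/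
lemma cGauss_lower : ∃ c : ℝ, 0 < c ∧ ∀ t : ℝ, 0 ≤ t → t ≤ 1 →
    ENNReal.ofReal (c * t) ≤ cGauss {z | Complex.normSq z ≤ t} := by
  refine ⟨((√Real.pi)⁻¹ * Real.exp (-1)) ^ 2 / 2, by positivity, fun t h0 h1 => ?_⟩
  have hm : MeasurableSet {z | Complex.normSq z ≤ t} :=
    measurableSet_le Complex.continuous_normSq.measurable measurable_const
  rw [cGauss, Measure.map_apply measurable_toC hm]
  set a := √(t / 2) with ha
  have ha0 : 0 ≤ a := Real.sqrt_nonneg _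
  have ha2 : a ^ 2 = t / 2 := Real.sq_sqrt (by linarith)
  have ha1 : a ≤ 1 := by nlinarith
  calc _ = ENNReal.ofReal (a * ((√Real.pi)⁻¹ * Real.exp (-1)))
        * ENNReal.ofReal (a * ((√Real.pi)⁻¹ * Real.exp (-1))) := by
        rw [← ENNReal.ofReal_mul (by positivity)]
        congr 1
        linear_combination (-((√Real.pi)⁻¹ * Real.exp (-1)) ^ 2) * ha2
    _ ≤ gaussianReal 0 (1 / 2) (Set.Icc (-a) a) * gaussianReal 0 (1 / 2) (Set.Icc (-a) a) :=
        mul_le_mul' (gaussian_Icc_lower a ha0 ha1) (gaussian_Icc_lower a ha0 ha1)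
    _ = entryLaw (Set.Icc (-a) a ×ˢ Set.Icc (-a) a) := by rw [entryLaw, Measure.prod_prod]
    _ ≤ _ := by
        apply measure_mono
        rintro ⟨x, y⟩ ⟨⟨hx1, hx2⟩, hy1, hy2⟩
        simp only [Set.mem_preimage, Set.mem_ofPred_eq, toC, Complex.normSq_mk]
        simp only at hx1 hx2 hy1 hy2
        nlinarith

/-! ### Outage and products of the smallest eigenvalues -/

/-- If `∑ 1 / (1 + x_q) > c` and `k ≤ c`, then the product of the `k + 1` smallest `x_q` is bounded.
Let `b ≤ a` be the `k`-th and `(k + 1)`-st smallest values. For `k ≥ 1` the hypothesis forces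
`1 / (1 + b) + L / (1 + a) > 1`, that is, roughly `a b ≤ L (1 + b)`; the product is then controlled
both when `b ≤ 1` and when `b > 1`. Individual boundedness of the `k + 1` values may fail when
`c = k`, which is why the product is used. -/
lemma exists_small_prod (L k : ℕ) (x : Fin L → ℝ) (hx : ∀ q, 0 ≤ x q) (c : ℝ) (hc : 0 < c)
    (hkc : (k : ℝ) ≤ c) (hkL : k < L) (h : c < ∑ q, 1 / (1 + x q)) :
    ∃ S : Finset (Fin L), S.card = k + 1 ∧ ∏ q ∈ S, x q ≤ (2 * L) ^ (k + 1) + L / c := by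
  set s := Tuple.sort x
  have hmono : Monotone (x ∘ s) := Tuple.monotone_sort x
  set y := x ∘ s with hy
  have hy0 : ∀ i, 0 ≤ y i := fun i => hx _
  have hsum : ∑ q, 1 / (1 + x q) = ∑ i, 1 / (1 + y i) :=
    (Equiv.sum_comp s (fun q => 1 / (1 + x q))).symm
  rw [hsum] at h
  have hL1 : (1 : ℝ) ≤ L := by exact_mod_cast (by omega : 1 ≤ L)
  set K : Fin L := ⟨k, hkL⟩ with hK
  have hIic : Finset.Iic K = insert K (Finset.Iio K) := (Finset.Iio_insert K).symm
  refine ⟨(Finset.Iic K).map s.toEmbedding, by simp [hK], ?_⟩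
  rw [Finset.prod_map]
  change ∏ i ∈ Finset.Iic K, y i ≤ _
  rw [hIic, Finset.prod_insert (by simp)]
  set a := y K with ha
  have ha0 : 0 ≤ a := hy0 K
  have hsplit : ∑ i, 1 / (1 + y i) ≤ ∑ i ∈ Finset.Iio K, 1 / (1 + y i) + L / (1 + a) := by
    rw [← Finset.sum_filter_add_sum_filter_not Finset.univ (· < K)]
    have h1 : Finset.univ.filter (· < K) = Finset.Iio K := by ext; simp
    rw [h1]
    gcongr
    calc _ ≤ ∑ i ∈ Finset.univ.filter (fun i => ¬ i < K), 1 / (1 + a) := by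
          refine Finset.sum_le_sum fun i hi => ?_
          have : K ≤ i := by simpa using hi
          have := hmono this
          exact one_div_le_one_div_of_le (by linarith) (by linarith)
      _ ≤ ∑ i : Fin L, 1 / (1 + a) := by
          refine Finset.sum_le_sum_of_subset_of_nonneg (Finset.filter_subset _ _) fun i _ _ => ?_
          positivity
      _ = _ := by simp [div_eq_mul_inv]
  have hpos : (0 : ℝ) ≤ (2 * L) ^ (k + 1) := by positivity
  have hpos2 : (0 : ℝ) ≤ L / c := by positivity
  -- For `k = 0` the bound `k ≤ c` is void, and strict positivity of `c` is used instead.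
  rcases k with _ | j
  · have hemp : Finset.Iio K = ∅ := by
      ext i; simp [hK, Fin.lt_def]
    rw [hemp] at hsplit ⊢
    simp only [Finset.sum_empty, zero_add, Finset.prod_empty, mul_one] at hsplit ⊢
    have h1 : c < L / (1 + a) := lt_of_lt_of_le h hsplit
    rw [lt_div_iff₀ (by linarith)] at h1
    have : a ≤ L / c := by
      rw [le_div_iff₀ hc]; nlinarith
    linarith
  · set B : Fin L := ⟨j, by omega⟩ with hB
    have hIio : Finset.Iio K = insert B (Finset.Iio B) := by
      ext i
      simp only [Finset.mem_Iio, Finset.mem_insert, Fin.lt_def, Fin.ext_iff, hK, hB]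
      omega
    have hBK : B ≤ K := by simp [hK, hB, Fin.le_def]
    rw [hIio, Finset.sum_insert (by simp)] at hsplit
    rw [hIio, Finset.prod_insert (by simp)]
    set b := y B with hb
    have hb0 : 0 ≤ b := hy0 B
    have hab : b ≤ a := hmono hBK
    have hj : ∑ i ∈ Finset.Iio B, 1 / (1 + y i) ≤ j := by
      calc _ ≤ ∑ i ∈ Finset.Iio B, (1 : ℝ) := by
            refine Finset.sum_le_sum fun i _ => ?_
            rw [div_le_one (by linarith [hy0 i])]
            linarith [hy0 i]
        _ = j := by simp [hB]
    have h1 : 1 < 1 / (1 + b) + L / (1 + a) := by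
      push_cast at hkc
      linarith
    have h2 : a * b ≤ L + L * b := by
      rw [div_add_div _ _ (by linarith) (by linarith), lt_div_iff₀ (by positivity)] at h1
      nlinarith
    have hle : ∀ i ∈ Finset.Iio B, y i ≤ b := fun i hi => hmono (Finset.mem_Iio.1 hi).le
    have hP0 : 0 ≤ ∏ i ∈ Finset.Iio B, y i := Finset.prod_nonneg fun i _ => hy0 i
    have h2L : (1 : ℝ) ≤ 2 * L := by linarith
    suffices a * (b * ∏ i ∈ Finset.Iio B, y i) ≤ (2 * L) ^ (j + 1 + 1) by linarith
    rcases le_total b 1 with hb1 | hb1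
    · have hP1 : ∏ i ∈ Finset.Iio B, y i ≤ 1 :=
        Finset.prod_le_one (fun i _ => hy0 i) fun i hi => (hle i hi).trans hb1
      calc a * (b * ∏ i ∈ Finset.Iio B, y i) ≤ a * (b * 1) := by gcongr
        _ ≤ 2 * L := by nlinarith
        _ = (2 * L) ^ 1 := (pow_one _).symm
        _ ≤ (2 * L) ^ (j + 1 + 1) := pow_le_pow_right₀ h2L (by omega)
    · have ha2 : a ≤ 2 * L := by
        by_contra! hcon
        nlinarith
      have hb2 : b ≤ 2 * L := hab.trans ha2
      have hP1 : ∏ i ∈ Finset.Iio B, y i ≤ (2 * L) ^ j := by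
        calc _ ≤ ∏ i ∈ Finset.Iio B, (2 * L : ℝ) :=
              Finset.prod_le_prod (fun i _ => hy0 i) fun i hi => (hle i hi).trans hb2
          _ = _ := by simp [hB]
      calc a * (b * ∏ i ∈ Finset.Iio B, y i) ≤ (2 * L) * ((2 * L) * (2 * L) ^ j) := by gcongr
        _ = _ := by ring

/-- Markov's inequality for the `-σ`-th moment of `∏ |Re z_p| |Im z_p|`, which factors by
independence. -/
lemma measure_prod_le {ι : Type*} [Fintype ι] (s : Finset ι) (σ : ℝ) (hσ : 0 < σ) (τ : ℝ)
    (hτ : 0 < τ) :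
    (Measure.pi fun _ : ι => cGauss) {z | ∏ p ∈ s, (‖(z p).re‖ₑ * ‖(z p).im‖ₑ) ≤ ENNReal.ofReal τ}
      ≤ (∫⁻ z, (‖z.re‖ₑ * ‖z.im‖ₑ) ^ (-σ) ∂cGauss) ^ s.card * ENNReal.ofReal (τ ^ σ) := by
  set K := ∫⁻ z, (‖z.re‖ₑ * ‖z.im‖ₑ) ^ (-σ) ∂cGauss with hK
  set f : (ι → ℂ) → ENNReal := fun z => ∏ p ∈ s, (‖(z p).re‖ₑ * ‖(z p).im‖ₑ) ^ (-σ) with hf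
  have hfi : ∫⁻ z, f z ∂(Measure.pi fun _ : ι => cGauss) = K ^ s.card := by
    have hX : Measurable fun z : ℂ => (‖z.re‖ₑ * ‖z.im‖ₑ) ^ (-σ) := by fun_prop
    rw [hf, lintegral_prod_eq_prod_lintegral_of_indepFun s
      (fun p (z : ι → ℂ) => (‖(z p).re‖ₑ * ‖(z p).im‖ₑ) ^ (-σ))
      (iIndepFun_pi (μ := fun _ : ι => cGauss)
        (X := fun _ z => (‖z.re‖ₑ * ‖z.im‖ₑ) ^ (-σ)) fun _ => hX.aemeasurable)
      (fun p => hX.comp (measurable_pi_apply p))]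
    rw [← Finset.prod_const]
    refine Finset.prod_congr rfl fun p _ => ?_
    exact (measurePreserving_eval (fun _ : ι => cGauss) p).lintegral_comp hX
  have hm := mul_meas_ge_le_lintegral₀ (μ := Measure.pi fun _ : ι => cGauss) (f := f)
    (by fun_prop) (ENNReal.ofReal τ ^ (-σ))
  rw [hfi] at hm
  have hinv : ENNReal.ofReal (τ ^ σ) * ENNReal.ofReal τ ^ (-σ) = 1 := by
    rw [ENNReal.ofReal_rpow_of_pos hτ, ← ENNReal.ofReal_mul (by positivity), ← Real.rpow_add hτ]
    simp
  calc _ ≤ (Measure.pi fun _ : ι => cGauss) {z | ENNReal.ofReal τ ^ (-σ) ≤ f z} := by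
        apply measure_mono
        intro z hz
        simp only [Set.mem_ofPred_eq] at hz ⊢
        rw [hf]
        simp only
        rw [ENNReal.prod_rpow_of_ne_top (fun i _ => ENNReal.mul_ne_top enorm_ne_top enorm_ne_top),
          ENNReal.rpow_neg, ENNReal.rpow_neg]
        exact ENNReal.inv_le_inv.2 (ENNReal.rpow_le_rpow hz hσ.le)
    _ = ENNReal.ofReal (τ ^ σ) * (ENNReal.ofReal τ ^ (-σ) *
          (Measure.pi fun _ : ι => cGauss) {z | ENNReal.ofReal τ ^ (-σ) ≤ f z}) := by
        rw [← mul_assoc, hinv, one_mul]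
    _ ≤ ENNReal.ofReal (τ ^ σ) * K ^ s.card := by gcongr
    _ = _ := mul_comm _ _

/-- If `f ρ` is at least of order `ρ ^ (-d)` and at most of order `ρ ^ (-d σ)` for every `σ < 1`,
then `log (f ρ) / log ρ` tends to `-d`. -/
lemma tendsto_log_div_log_s10 (f : ℝ → ℝ) (d : ℕ) (A C : ℝ) (hA : 0 < A) (hC : 0 < C)
    (hl : ∀ ρ, 1 ≤ ρ → A * (ρ ^ d)⁻¹ ≤ f ρ)
    (hu : ∀ σ : ℝ, 0 < σ → σ < 1 → ∃ B : ℝ, ∀ ρ, 1 ≤ ρ → f ρ ≤ B * (C * (ρ ^ d)⁻¹) ^ σ) :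
    Tendsto (fun ρ => Real.log (f ρ) / Real.log ρ) atTop (nhds (-(d : ℝ))) := by
  have hlin : ∀ a b : ℝ, Tendsto (fun ρ => (a + b * Real.log ρ) / Real.log ρ) atTop (nhds b) := by
    intro a b
    have h1 : Tendsto (fun ρ => a / Real.log ρ + b) atTop (nhds (0 + b)) :=
      (Real.tendsto_log_atTop.const_div_atTop a).add_const b
    rw [zero_add] at h1
    refine h1.congr' ?_
    filter_upwards [eventually_gt_atTop 1] with ρ hρ
    have := Real.log_pos hρ
    field_simp
  have hfpos : ∀ ρ, 1 ≤ ρ → 0 < f ρ := fun ρ hρ =>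
    lt_of_lt_of_le (by positivity) (hl ρ hρ)
  rw [tendsto_order]
  constructor
  · intro u hu'
    filter_upwards [(hlin (Real.log A) (-d)).eventually_const_lt hu', eventually_gt_atTop 1]
      with ρ h1 hρ
    refine h1.trans_le ?_
    have hlog := Real.log_pos hρ
    have hρ0 : 0 < ρ := by linarith
    gcongr
    have := Real.log_le_log (by positivity) (hl ρ hρ.le)
    rw [Real.log_mul hA.ne' (by positivity), Real.log_inv, Real.log_pow] at this
    linarith
  · intro u hu'
    obtain ⟨σ, hσ0, hσ1, hσu⟩ : ∃ σ : ℝ, 0 < σ ∧ σ < 1 ∧ -(σ * d) < u := by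
      have ht : Tendsto (fun σ : ℝ => -(σ * d)) (nhdsWithin 1 (Set.Iio 1)) (nhds (-(1 * d))) :=
        (((continuous_id.mul continuous_const).neg).tendsto (1 : ℝ)).mono_left nhdsWithin_le_nhds
      rw [one_mul] at ht
      have h0 : ∀ᶠ σ : ℝ in nhdsWithin 1 (Set.Iio 1), 0 < σ :=
        nhdsWithin_le_nhds (lt_mem_nhds one_pos)
      obtain ⟨σ, h1, h2, h3⟩ := ((ht.eventually_lt_const hu').and
        (h0.and self_mem_nhdsWithin)).exists
      exact ⟨σ, h2, h3, h1⟩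
    obtain ⟨B, hB⟩ := hu σ hσ0 hσ1
    have hB0 : 0 < B := by
      have h1 := (hfpos 1 le_rfl).trans_le (hB 1 le_rfl)
      exact pos_of_mul_pos_left h1 (by positivity)
    filter_upwards [(hlin (Real.log B + σ * Real.log C) (-(σ * d))).eventually_lt_const hσu,
      eventually_gt_atTop 1] with ρ h1 hρ
    refine lt_of_le_of_lt ?_ h1
    have hlog := Real.log_pos hρ
    have hρ0 : 0 < ρ := by linarith
    gcongr
    have := Real.log_le_log (hfpos ρ hρ.le) (hB ρ hρ.le)
    rw [Real.log_mul hB0.ne' (by positivity), Real.log_rpow (by positivity),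
      Real.log_mul hC.ne' (by positivity), Real.log_inv, Real.log_pow] at this
    linarith

/-- Upper bound on the outage probability: outage forces the product of some `k + 1` of the
normalised eigenvalues to be `O(1)`. Each eigenvalue dominates `ρ |Re z| |Im z|` for all `N` of its
entries, so the product of these over `(k + 1) N` entries is `O(ρ ^ (-(k + 1) N))`. -/
lemma outage_upper (N L k : ℕ) (c : ℝ) (hc : 0 < c) (hkc : (k : ℝ) ≤ c) (hkL : k < L)
    (σ : ℝ) (hσ : 0 < σ) (hσ1 : σ < 1) :
    ∃ B : ℝ, ∀ ρ : ℝ, 1 ≤ ρ → ((Measure.pi fun _ : Fin L × Fin N => cGauss)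
      {z | c < ∑ q : Fin L,
        1 / (1 + ρ * ((L : ℝ) * ∑ l : Fin N, Complex.normSq (z (q, l))))}).toReal
      ≤ B * (((2 * L) ^ (k + 1) + L / c) ^ N * (ρ ^ ((k + 1) * N))⁻¹) ^ σ := by
  set C : ℝ := (2 * L) ^ (k + 1) + L / c with hC
  set K := ∫⁻ z, (‖z.re‖ₑ * ‖z.im‖ₑ) ^ (-σ) ∂cGauss with hK
  have hKtop : K ≠ ⊤ := (lintegral_cGauss_rpow σ hσ1).ne
  have hL1 : (1 : ℝ) ≤ L := by exact_mod_cast (by omega : 1 ≤ L)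
  have hCpos : 0 < C := by positivity
  set F : Finset (Finset (Fin L)) := Finset.powersetCard (k + 1) Finset.univ with hF
  refine ⟨(F.card * K ^ ((k + 1) * N)).toReal, fun ρ hρ => ?_⟩
  set τ : ℝ := C ^ N * (ρ ^ ((k + 1) * N))⁻¹ with hτ
  have hρ0 : 0 < ρ := by linarith
  have hτ0 : 0 < τ := by positivity
  set μ := (Measure.pi fun _ : Fin L × Fin N => cGauss) with hμ
  have hmain : μ {z | c < ∑ q : Fin L,
        1 / (1 + ρ * ((L : ℝ) * ∑ l : Fin N, Complex.normSq (z (q, l))))}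
      ≤ F.card * K ^ ((k + 1) * N) * ENNReal.ofReal (τ ^ σ) := by
    calc _ ≤ μ (⋃ S ∈ F, {z | ∏ p ∈ S ×ˢ (Finset.univ : Finset (Fin N)),
              (‖(z p).re‖ₑ * ‖(z p).im‖ₑ) ≤ ENNReal.ofReal τ}) := by
          apply measure_mono
          intro z hz
          have hx0 : ∀ q, 0 ≤ ρ * ((L : ℝ) * ∑ l : Fin N, Complex.normSq (z (q, l))) := fun q =>
            mul_nonneg hρ0.le (mul_nonneg (by linarith)
              (Finset.sum_nonneg fun l _ => Complex.normSq_nonneg _))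
          obtain ⟨S, hS, hprod⟩ := exists_small_prod L k
            (fun q => ρ * ((L : ℝ) * ∑ l : Fin N, Complex.normSq (z (q, l)))) hx0 c hc hkc hkL hz
          simp only [Set.mem_iUnion, Set.mem_ofPred_eq]
          refine ⟨S, by simp [hF, hS], ?_⟩
          have he : ∀ p, ‖(z p).re‖ₑ * ‖(z p).im‖ₑ = ENNReal.ofReal (|(z p).re| * |(z p).im|) := by
            intro p
            rw [Real.enorm_eq_ofReal_abs, Real.enorm_eq_ofReal_abs,
              ENNReal.ofReal_mul (abs_nonneg _)]
          simp_rw [he]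
          rw [← ENNReal.ofReal_prod_of_nonneg (fun p _ => by positivity)]
          apply ENNReal.ofReal_le_ofReal
          rw [hτ, ← div_eq_mul_inv, le_div_iff₀ (by positivity)]
          calc (∏ p ∈ S ×ˢ (Finset.univ : Finset (Fin N)), |(z p).re| * |(z p).im|)
                * ρ ^ ((k + 1) * N)
              = ∏ q ∈ S, ∏ l : Fin N, ρ * (|(z (q, l)).re| * |(z (q, l)).im|) := by
                rw [Finset.prod_product]
                simp only [Finset.prod_mul_distrib, Finset.prod_const, Finset.card_univ,
                  Fintype.card_fin, hS]
                ring
            _ ≤ ∏ q ∈ S, ∏ l : Fin N, ρ * ((L : ℝ) * ∑ l : Fin N, Complex.normSq (z (q, l))) := by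
                refine Finset.prod_le_prod (fun q _ => Finset.prod_nonneg fun l _ => by positivity)
                  fun q _ => Finset.prod_le_prod (fun l _ => by positivity) fun l _ => ?_
                refine mul_le_mul_of_nonneg_left ?_ hρ0.le
                have h1 : |(z (q, l)).re| * |(z (q, l)).im| ≤ Complex.normSq (z (q, l)) := by
                  rw [Complex.normSq_apply]
                  nlinarith [sq_abs (z (q, l)).re, sq_abs (z (q, l)).im,
                    sq_nonneg (|(z (q, l)).re| - |(z (q, l)).im|), sq_nonneg (z (q, l)).re,
                    sq_nonneg (z (q, l)).im]
                have h2 : Complex.normSq (z (q, l)) ≤ ∑ l : Fin N, Complex.normSq (z (q, l)) :=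
                  Finset.single_le_sum (f := fun l => Complex.normSq (z (q, l)))
                    (fun l _ => Complex.normSq_nonneg _) (Finset.mem_univ l)
                have h3 := Complex.normSq_nonneg (z (q, l))
                nlinarith
            _ = (∏ q ∈ S, ρ * ((L : ℝ) * ∑ l : Fin N, Complex.normSq (z (q, l)))) ^ N := by
                simp only [Finset.prod_const, Finset.card_univ, Fintype.card_fin, Finset.prod_pow]
            _ ≤ C ^ N := by
                gcongr
                exact Finset.prod_nonneg fun q _ => hx0 q
      _ ≤ ∑ S ∈ F, μ {z | ∏ p ∈ S ×ˢ (Finset.univ : Finset (Fin N)),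
              (‖(z p).re‖ₑ * ‖(z p).im‖ₑ) ≤ ENNReal.ofReal τ} := measure_biUnion_finset_le _ _
      _ ≤ ∑ S ∈ F, K ^ ((k + 1) * N) * ENNReal.ofReal (τ ^ σ) := by
          refine Finset.sum_le_sum fun S hS => ?_
          have := measure_prod_le (S ×ˢ (Finset.univ : Finset (Fin N))) σ hσ τ hτ0
          have hcard : S.card = k + 1 := (Finset.mem_powersetCard.1 hS).2
          rwa [Finset.card_product, hcard, Finset.card_univ, Fintype.card_fin] at this
      _ = _ := by rw [Finset.sum_const, nsmul_eq_mul, mul_assoc]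
  have htop : (F.card : ENNReal) * K ^ ((k + 1) * N) ≠ ⊤ :=
    ENNReal.mul_ne_top (by simp) (ENNReal.pow_ne_top hKtop)
  have := ENNReal.toReal_mono (ENNReal.mul_ne_top htop ENNReal.ofReal_ne_top) hmain
  rwa [ENNReal.toReal_mul, ENNReal.toReal_ofReal (by positivity)] at this

/-- Lower bound on the outage probability: outage occurs as soon as the `(k + 1) N` entries
attached to `k + 1` fixed eigenvalues all have squared modulus at most a constant times `1 / ρ`. -/
lemma outage_lower (N L k : ℕ) (hN : 1 ≤ N) (c : ℝ) (hc : 0 < c) (hkc : c < k + 1) (hkL : k < L) :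
    ∃ A : ℝ, 0 < A ∧ ∀ ρ : ℝ, 1 ≤ ρ → A * (ρ ^ ((k + 1) * N))⁻¹ ≤
      ((Measure.pi fun _ : Fin L × Fin N => cGauss) {z | c < ∑ q : Fin L,
        1 / (1 + ρ * ((L : ℝ) * ∑ l : Fin N, Complex.normSq (z (q, l))))}).toReal := by
  obtain ⟨a, ha0, ha⟩ := cGauss_lower
  have hL1 : (1 : ℝ) ≤ L := by exact_mod_cast (by omega : 1 ≤ L)
  have hN1 : (1 : ℝ) ≤ N := by exact_mod_cast hN
  -- If `k + 1` of the terms have `ρ λ_q ≤ δ`, they alone contribute `(k + 1) / (1 + δ) > c`.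
  obtain ⟨δ, hδ0, hδ1, hδ⟩ : ∃ δ : ℝ, 0 < δ ∧ δ ≤ 1 ∧ c * (1 + δ) < k + 1 := by
    refine ⟨min 1 ((k + 1 - c) / (2 * c)), ?_, min_le_left _ _, ?_⟩
    · have : 0 < k + 1 - c := by linarith
      positivity
    · have h1 := min_le_right 1 ((k + 1 - c) / (2 * c))
      rw [le_div_iff₀ (by positivity)] at h1
      nlinarith
  set K : Fin L := ⟨k, hkL⟩ with hK
  refine ⟨(a * (δ / (L * N))) ^ ((k + 1) * N), by positivity, fun ρ hρ => ?_⟩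
  have hρ0 : 0 < ρ := by linarith
  set t : ℝ := δ / (L * N) / ρ with ht
  have ht0 : 0 < t := by positivity
  have ht1 : t ≤ 1 := by
    rw [ht, div_div, div_le_one (by positivity)]
    have : 1 ≤ (L : ℝ) * N := by nlinarith
    nlinarith
  rw [← div_eq_mul_inv, ← div_pow]
  have hat : a * (δ / (L * N)) / ρ = a * t := by rw [ht]; ring
  rw [hat]
  apply (ENNReal.ofReal_le_iff_le_toReal (measure_ne_top _ _)).1
  rw [ENNReal.ofReal_pow (by positivity)]
  set E : Fin L × Fin N → Set ℂ := fun p =>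
    if p.1 ≤ K then {w | Complex.normSq w ≤ t} else Set.univ with hE
  calc ENNReal.ofReal (a * t) ^ ((k + 1) * N)
      = ∏ p : Fin L × Fin N, if p.1 ≤ K then ENNReal.ofReal (a * t) else 1 := by
        rw [Fintype.prod_prod_type]
        trans ∏ q : Fin L, (if q ≤ K then ENNReal.ofReal (a * t) else 1) ^ N
        swap
        · refine Finset.prod_congr rfl fun q _ => ?_
          by_cases hq : q ≤ K <;> simp [hq]
        rw [Finset.prod_pow, ← Finset.prod_filter, Finset.prod_const, pow_mul]
        congr 2
        have : Finset.univ.filter (· ≤ K) = Finset.Iic K := by ext; simp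
        rw [this]; simp [hK]
    _ ≤ ∏ p : Fin L × Fin N, cGauss (E p) := by
        refine Finset.prod_le_prod' fun p _ => ?_
        simp only [hE]
        split_ifs
        · exact ha t ht0.le ht1
        · simp
    _ = (Measure.pi fun _ : Fin L × Fin N => cGauss) (Set.pi Set.univ E) :=
        (Measure.pi_pi _ _).symm
    _ ≤ _ := by
        apply measure_mono
        intro z hz
        simp only [Set.mem_ofPred_eq]
        have hx0 : ∀ q, 0 ≤ ρ * ((L : ℝ) * ∑ l : Fin N, Complex.normSq (z (q, l))) := fun q =>
          mul_nonneg hρ0.le (mul_nonneg (by linarith)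
            (Finset.sum_nonneg fun l _ => Complex.normSq_nonneg _))
        calc c < (k + 1) / (1 + δ) := by rwa [lt_div_iff₀ (by linarith)]
          _ = ∑ q ∈ Finset.Iic K, 1 / (1 + δ) := by
              rw [Finset.sum_const, Fin.card_Iic]
              simp [hK, div_eq_mul_inv]
          _ ≤ ∑ q ∈ Finset.Iic K,
                1 / (1 + ρ * ((L : ℝ) * ∑ l : Fin N, Complex.normSq (z (q, l)))) := by
              refine Finset.sum_le_sum fun q hq => ?_
              have hqK : q ≤ K := Finset.mem_Iic.1 hq
              apply one_div_le_one_div_of_le (by linarith [hx0 q])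
              have hs : ∑ l : Fin N, Complex.normSq (z (q, l)) ≤ N * t := by
                calc _ ≤ ∑ l : Fin N, t := by
                      refine Finset.sum_le_sum fun l _ => ?_
                      have := hz (q, l) (Set.mem_univ _)
                      simpa [hE, hqK] using this
                  _ = _ := by simp
              have : ρ * ((L : ℝ) * (N * t)) = δ := by
                rw [ht]; field_simp
              have h2 : ρ * ((L : ℝ) * ∑ l : Fin N, Complex.normSq (z (q, l)))
                  ≤ ρ * ((L : ℝ) * (N * t)) := by gcongr
              linarith
          _ ≤ _ := by
              refine Finset.sum_le_sum_of_subset_of_nonneg (Finset.subset_univ _) fun q _ _ => ?_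
              have := hx0 q
              positivity

/-! ### The diversity order -/

/-- In a SIMO quasi-static frequency-selective channel with memory `ν`, `N` receive
antennas and data block length `L_d = ν+1`, the MMSE receiver diversity under
cyclic-prefix transmission is `N·(⌊L_d·2^{−R}⌋ + 1)`: for every fixed rate `R > 0`,
`lim_{ρ→∞} log P_out(ρ) / log ρ = −N·(⌊L_d·2^{−R}⌋ + 1)`. -/
theorem simo_cp_mmse_diversity_block_eq_taps (N ν : ℕ) (hN : 1 ≤ N)
    (R : ℝ) (hR : 0 < R) :
    Tendsto (fun ρ : ℝ => Real.log (PoutSIMO N ν (ν + 1) R ρ) / Real.log ρ) atTop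
      (nhds (-((N : ℝ) * ((⌊((ν : ℝ) + 1) * 2 ^ (-R)⌋ : ℝ) + 1)))) := by
  set c : ℝ := ((ν : ℝ) + 1) * 2 ^ (-R) with hc
  have hc0 : 0 < c := by positivity
  set k : ℕ := ⌊c⌋₊ with hk
  have hkc : (k : ℝ) ≤ c := Nat.floor_le hc0.le
  have hkc' : c < k + 1 := Nat.lt_floor_add_one c
  have hcL : c < ((ν + 1 : ℕ) : ℝ) := by
    have : (2 : ℝ) ^ (-R) < 1 := Real.rpow_lt_one_of_one_lt_of_neg (by norm_num) (by linarith)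
    rw [hc]; push_cast
    nlinarith [(Nat.cast_nonneg ν : (0 : ℝ) ≤ ν)]
  have hkL : k < ν + 1 := by exact_mod_cast hkc.trans_lt hcL
  have hfloor : ((⌊c⌋ : ℤ) : ℝ) = k := by
    rw [hk, natCast_floor_eq_intCast_floor hc0.le]
  have hcc : ((ν + 1 : ℕ) : ℝ) * 2 ^ (-R) = c := by rw [hc]; push_cast; rfl
  obtain ⟨A, hA, hl⟩ := outage_lower N (ν + 1) k hN c hc0 hkc' hkL
  have hlim : -((N : ℝ) * ((⌊c⌋ : ℝ) + 1)) = -(((k + 1) * N : ℕ) : ℝ) := by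
    rw [hfloor]; push_cast; ring
  rw [hlim]
  refine tendsto_log_div_log_s10 _ _ A
    (((2 * ((ν + 1 : ℕ) : ℝ)) ^ (k + 1) + ((ν + 1 : ℕ) : ℝ) / c) ^ N) hA ?_ (fun ρ hρ => ?_) (fun σ h0 h1 => ?_)
  · positivity
  · rw [PoutSIMO_eq, hcc]
    exact hl ρ hρ
  · obtain ⟨B, hB⟩ := outage_upper N (ν + 1) k c hc0 hkc hkL σ h0 h1
    refine ⟨B, fun ρ hρ => ?_⟩
    rw [PoutSIMO_eq, hcc]
    exact hB ρ hρ

end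
end
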